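/- arXiv:1110.4875 — 3 statements merged into one kernel-verified Lean document; each statement's English description precedes it below -/
import Mathlib

section
/- For all integers m ≥ 1 and n ≥ 1 and all complex numbers α, β with Re α > 0 and Re β > 0, the identity ∑_{l=0}^∞ 1/((l+α)^n (l+β)^m) = ∑_{k₁+⋯+kₙ = m+n−1, kᵢ ∈ ℤ_{≥1}} ∑_{0 ≤ m₁ < ⋯ < mₙ} ((α)_{m₁}/m₁!) · (mₙ!/(α)_{mₙ+1}) · 1/((m₁+β)^{k₁} ⋯ (mₙ+β)^{kₙ}) holds, where the outer sum on the right is over all n-tuples of positive integers (k₁,…,kₙ) with k₁+⋯+kₙ = m+n−1. -/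
/-!
Write `x i = 1 / (t i + β)` and `n = N + 1`. For a fixed chain `t 0 < ⋯ < t N`, the sum over the
exponents is `(∏ i, x i) * h_{m-1}(x)`, with `h` the complete homogeneous symmetric polynomial, so
the right-hand side is a single series `F(α, β)` over chains, weighted by
`wt α (t 0) (t N) = (α)_{t 0} / (t 0)! * (t N)! / (α)_{t N + 1}` (`term`).

The proof telescopes in the parameters:
`F(α, β) - F(α + 1, β + 1) = 1 / (α ^ n * β ^ m)`, and `F(α + L, β + L) → 0` as `L → ∞`.

Shifting a chain by one shows that the difference is the series with the extra factor
`1 - t 0 / t N`. For `n ≥ 2`, the identity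
`(x 0 - x N) h_{m-1}(x) = h_m(x without x N) - h_m(x without x 0)` splits its summand in two. The
first piece can be summed over `t N` and the second over `t 0`, since
`∑_{t > s} wt α r t / t = wt α r s / α` and `∑_{s < p} wt α s t = wt α p t * p / α`.
What remains is `β / α` times the same difference series for `n - 1` and `m + 1`
(`hasSum_diff`); for `n = 1` only the chain `t 0 = 0` contributes.

The first of these two sums, applied to the real weight `wt (re α)` from the largest entry
downwards, also gives the absolute convergence of all the series (`summable_major`), and the limit
follows by dominated convergence.
-/

open scoped BigOperators

/-- The Pochhammer symbol `(a)_m = a (a+1) ⋯ (a+m-1)`, with `(a)_0 = 1`. -/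
noncomputable def poch (a : ℂ) (m : ℕ) : ℂ := ∏ i ∈ Finset.range m, (a + i)

/-! ### The weight and its telescoping sums -/

/-- The weight `(a)_s / s! * t! / (a)_{t+1}`, written for `s ≤ t` with the common factors
`a, …, a + s - 1` cancelled. It is stated over a general field because the real weight
`wt (re α)` dominates the complex one. -/
noncomputable def wt {K : Type*} [Field K] (a : K) (s t : ℕ) : K :=
  (t.factorial : K) / (s.factorial : K) / ∏ j ∈ Finset.Ico s (t + 1), (a + j)

lemma poch_mul_eq_wt {a : ℂ} (ha : ∀ j : ℕ, a + j ≠ 0) {s t : ℕ} (h : s ≤ t) :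
    poch a s / (s.factorial : ℂ) * ((t.factorial : ℂ) / poch a (t + 1)) = wt a s t := by
  have h1 : poch a (t + 1) = poch a s * ∏ j ∈ Finset.Ico s (t + 1), (a + j) := by
    unfold poch
    rw [Finset.prod_range_mul_prod_Ico _ (by omega)]
  have h2 : poch a s ≠ 0 := Finset.prod_ne_zero_iff.2 fun j _ => ha j
  have h3 : ∏ j ∈ Finset.Ico s (t + 1), (a + j) ≠ 0 := Finset.prod_ne_zero_iff.2 fun j _ => ha j
  have h4 : (s.factorial : ℂ) ≠ 0 := by exact_mod_cast s.factorial_ne_zero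
  rw [h1, wt]
  field_simp

section wt
variable {K : Type*} [Field K] [CharZero K] {a : K}

lemma wt_self (a : K) (t : ℕ) : wt a t t = 1 / (a + t) := by
  have h4 : (t.factorial : K) ≠ 0 := by exact_mod_cast t.factorial_ne_zero
  simp [wt, h4]

lemma wt_succ_right (a : K) {s t : ℕ} (h : s ≤ t + 1) :
    wt a s (t + 1) = wt a s t * ((t + 1) / (a + (t + 1))) := by
  rw [wt, wt, Finset.prod_Ico_succ_top h, Nat.factorial_succ]
  push_cast
  simp only [div_eq_mul_inv, mul_inv]
  ring

lemma wt_succ_left (ha : ∀ j : ℕ, a + j ≠ 0) {s t : ℕ} (h : s ≤ t) :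
    wt a s t = wt a (s + 1) t * ((s + 1) / (a + s)) := by
  have h4 : (s.factorial : K) ≠ 0 := by exact_mod_cast s.factorial_ne_zero
  have h5 : (s : K) + 1 ≠ 0 := by exact_mod_cast s.succ_ne_zero
  rw [wt, wt, Finset.prod_eq_prod_Ico_succ_bot (by omega), Nat.factorial_succ]
  push_cast
  have := ha s
  have h3 : ∏ j ∈ Finset.Ico (s + 1) (t + 1), (a + j) ≠ 0 :=
    Finset.prod_ne_zero_iff.2 fun j _ => ha j
  field_simp

lemma wt_add_one (a : K) (s t : ℕ) :
    wt (a + 1) s t = wt a (s + 1) (t + 1) * ((s + 1) / (t + 1)) := by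
  have h4 : (s : K) + 1 ≠ 0 := by exact_mod_cast s.succ_ne_zero
  have h5 : (t : K) + 1 ≠ 0 := by exact_mod_cast t.succ_ne_zero
  have h6 : ∏ j ∈ Finset.Ico s (t + 1), (a + 1 + j)
      = ∏ j ∈ Finset.Ico (s + 1) (t + 1 + 1), (a + j) := by
    rw [← Finset.prod_Ico_add' (fun j : ℕ => a + (j : K)) s (t + 1) 1]
    refine Finset.prod_congr rfl fun j _ => ?_
    push_cast; ring
  rw [wt, wt, h6, Nat.factorial_succ, Nat.factorial_succ]
  push_cast
  simp only [div_eq_mul_inv, mul_inv]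
  field_simp

lemma sum_wt_left (ha : ∀ j : ℕ, a + j ≠ 0) (p : ℕ) {t : ℕ} (h : p ≤ t) :
    ∑ s ∈ Finset.range p, wt a s t = wt a p t * p / a := by
  have ha0 : a ≠ 0 := by simpa using ha 0
  induction p with
  | zero => simp
  | succ p ih =>
    rw [Finset.sum_range_succ, ih (by omega), wt_succ_left ha (by omega : p ≤ t)]
    have := ha p
    push_cast
    field_simp
    ring

/-- The term `wt a s (t+1) / (t+1)` is `1/a` times a consecutive difference of `wt a s`. -/
lemma sum_wt_right (ha : ∀ j : ℕ, a + j ≠ 0) {s t : ℕ} (h : s ≤ t) (J : ℕ) :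
    ∑ j ∈ Finset.range J, wt a s (t + 1 + j) / ((t + 1 + j : ℕ) : K)
      = (wt a s t - wt a s (t + J)) / a := by
  have ha0 : a ≠ 0 := by simpa using ha 0
  induction J with
  | zero => simp
  | succ J ih =>
    rw [Finset.sum_range_succ, ih, show t + 1 + J = (t + J) + 1 by ring,
      show t + (J + 1) = (t + J) + 1 by ring, wt_succ_right a (by omega : s ≤ t + J + 1)]
    have h1 := ha (t + J + 1)
    have h2 : ((t + J + 1 : ℕ) : K) ≠ 0 := by exact_mod_cast (t + J).succ_ne_zero
    push_cast at h1 h2 ⊢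
    field_simp
    ring

end wt

lemma re_ne {α : ℂ} (hα : 0 < α.re) (j : ℕ) : α + j ≠ 0 := by
  intro h
  have := congrArg Complex.re h
  simp at this
  have : (0 : ℝ) ≤ j := j.cast_nonneg
  linarith

lemma le_norm_add {α : ℂ} {a : ℝ} (h : a ≤ α.re) (j : ℕ) : a + j ≤ ‖α + j‖ := by
  have := Complex.re_le_norm (α + j)
  simp at this
  linarith

lemma wt_nonneg {a : ℝ} (ha : 0 < a) (s t : ℕ) : 0 ≤ wt a s t := by
  unfold wt; positivity

lemma norm_wt_le {α : ℂ} {a : ℝ} (ha : 0 < a) (h : a ≤ α.re) (s t : ℕ) :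
    ‖wt α s t‖ ≤ wt a s t := by
  unfold wt
  rw [norm_div, norm_div, Complex.norm_natCast, Complex.norm_natCast, norm_prod]
  gcongr with j _
  exact le_norm_add h j

/-- By the Euler limit formula, `t! / (a)_{t+1}` is asymptotic to `Γ(a) / t ^ a`. -/
lemma tendsto_wt_real {a : ℝ} (ha : 0 < a) (s : ℕ) :
    Filter.Tendsto (fun t => wt a s t) Filter.atTop (nhds 0) := by
  have h0 : Filter.Tendsto (fun t => wt a 0 t) Filter.atTop (nhds 0) := by
    have h1 := (Real.GammaSeq_tendsto_Gamma a).mul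
      ((tendsto_rpow_neg_atTop ha).comp tendsto_natCast_atTop_atTop)
    rw [mul_zero] at h1
    refine h1.congr' ?_
    filter_upwards [Filter.eventually_gt_atTop 0] with t ht
    have ht' : (0 : ℝ) < t := by exact_mod_cast ht
    have h2 : (t : ℝ) ^ a ≠ 0 := (Real.rpow_pos_of_pos ht' a).ne'
    simp only [Real.GammaSeq, Function.comp, wt, Real.rpow_neg ht'.le, Nat.factorial_zero,
      Nat.cast_one, div_one, Finset.range_eq_Ico]
    field_simp
  have h1 : ∀ j : ℕ, a + j ≠ 0 := fun j => by positivity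
  induction s with
  | zero => exact h0
  | succ s ih =>
    have h2 := ih.mul_const ((a + s) / (s + 1))
    rw [zero_mul] at h2
    refine h2.congr' ?_
    filter_upwards [Filter.eventually_ge_atTop s] with t ht
    rw [wt_succ_left h1 ht]
    have := h1 s
    field_simp

lemma hasSum_wt_real {a : ℝ} (ha : 0 < a) {s t : ℕ} (h : s ≤ t) :
    HasSum (fun j : ℕ => wt a s (t + 1 + j) / ((t + 1 + j : ℕ) : ℝ)) (wt a s t / a) := by
  rw [hasSum_iff_tendsto_nat_of_nonneg fun j => div_nonneg (wt_nonneg ha _ _) (Nat.cast_nonneg _)]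
  simp_rw [sum_wt_right (fun j : ℕ => (by positivity : a + j ≠ 0)) h]
  have h1 := (tendsto_wt_real ha s).comp (Filter.tendsto_add_atTop_nat t)
  have h2 := (h1.const_sub (wt a s t)).div_const a
  rw [sub_zero] at h2
  refine h2.congr fun J => ?_
  simp only [Function.comp]
  rw [add_comm J t]

lemma hasSum_wt {α : ℂ} (hα : 0 < α.re) {s t : ℕ} (h : s ≤ t) :
    HasSum (fun j : ℕ => wt α s (t + 1 + j) / ((t + 1 + j : ℕ) : ℂ)) (wt α s t / α) := by
  have hs : Summable (fun j : ℕ => wt α s (t + 1 + j) / ((t + 1 + j : ℕ) : ℂ)) := by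
    refine Summable.of_norm_bounded (hasSum_wt_real hα h).summable fun j => ?_
    rw [norm_div, Complex.norm_natCast]
    gcongr
    exact norm_wt_le hα le_rfl _ _
  rw [hs.hasSum_iff_tendsto_nat]
  simp_rw [sum_wt_right (re_ne hα) h]
  have h0 : Filter.Tendsto (fun t => wt α s t) Filter.atTop (nhds 0) :=
    squeeze_zero_norm (fun t => norm_wt_le hα le_rfl s t) (tendsto_wt_real hα s)
  have h1 := h0.comp (Filter.tendsto_add_atTop_nat t)
  have h2 := (h1.const_sub (wt α s t)).div_const α
  rw [sub_zero] at h2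
  refine h2.congr fun J => ?_
  simp only [Function.comp]
  rw [add_comm J t]

/-! ### Complete homogeneous symmetric polynomials -/

/-- The geometric series `1 / (1 - x X)`. -/
noncomputable def geomPS (x : ℂ) : PowerSeries ℂ := PowerSeries.mk fun j => x ^ j

/-- The complete homogeneous symmetric polynomial of degree `m` in `x`, defined as the
coefficient of `X ^ m` in `∏ i, 1 / (1 - x i X)`. -/
noncomputable def hsym {n : ℕ} (m : ℕ) (x : Fin n → ℂ) : ℂ :=
  PowerSeries.coeff m (∏ i, geomPS (x i))

lemma geomPS_eq (x : ℂ) : geomPS x = 1 + PowerSeries.C x * (PowerSeries.X * geomPS x) := by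
  ext j
  cases j with
  | zero => simp [geomPS]
  | succ j => simp [geomPS, PowerSeries.coeff_succ_X_mul, pow_succ', PowerSeries.coeff_one]

lemma coeff_geomPS_mul (x : ℂ) (P : PowerSeries ℂ) (m : ℕ) :
    PowerSeries.coeff (m + 1) (geomPS x * P)
      = PowerSeries.coeff (m + 1) P + x * PowerSeries.coeff m (geomPS x * P) := by
  conv_lhs => rw [geomPS_eq x]
  rw [show (1 + PowerSeries.C x * (PowerSeries.X * geomPS x)) * P
    = P + PowerSeries.C x * (PowerSeries.X * (geomPS x * P)) by ring, map_add,
    PowerSeries.coeff_C_mul, PowerSeries.coeff_succ_X_mul]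

lemma hsym_eq_sum {n : ℕ} (m : ℕ) (x : Fin n → ℂ) :
    hsym m x = ∑ l ∈ Finset.univ.finsuppAntidiag m, ∏ i, x i ^ l i := by
  simp [hsym, geomPS, PowerSeries.coeff_prod]

lemma sub_mul_hsym {n : ℕ} (m : ℕ) (x : Fin (n + 1) → ℂ) :
    (x 0 - x (Fin.last n)) * hsym m x
      = hsym (m + 1) (fun i => x i.castSucc) - hsym (m + 1) (fun i => x i.succ) := by
  have h1 : hsym (m + 1) x = hsym (m + 1) (fun i => x i.succ) + x 0 * hsym m x := by
    simp only [hsym, Fin.prod_univ_succ, coeff_geomPS_mul]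
  have h2 : hsym (m + 1) x = hsym (m + 1) (fun i => x i.castSucc) + x (Fin.last n) * hsym m x := by
    simp only [hsym, Fin.prod_univ_castSucc, mul_comm _ (geomPS (x (Fin.last n))),
      coeff_geomPS_mul]
  linear_combination h2 - h1

lemma norm_hsym_le {n : ℕ} (m : ℕ) {x : Fin n → ℂ} {r : ℝ} (h : ∀ i, ‖x i‖ ≤ r) :
    ‖hsym m x‖ ≤ ((Finset.univ : Finset (Fin n)).finsuppAntidiag m).card * r ^ m := by
  rw [hsym_eq_sum, ← nsmul_eq_mul]
  refine (norm_sum_le _ _).trans (Finset.sum_le_card_nsmul _ _ _ fun l hl => ?_)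
  rw [Finset.mem_finsuppAntidiag] at hl
  rw [norm_prod, ← hl.1, ← Finset.prod_pow_eq_pow_sum]
  refine Finset.prod_le_prod (fun i _ => norm_nonneg _) fun i _ => ?_
  rw [norm_pow]
  exact pow_le_pow_left₀ (norm_nonneg _) (h i) _

/-! ### Strictly increasing tuples -/

/-- Strictly increasing tuples `t 0 < ⋯ < t N` of natural numbers. -/
abbrev Chain (N : ℕ) := {t : Fin (N + 1) → ℕ // StrictMono t}

lemma Chain.le_last {N : ℕ} (t : Chain N) (i : Fin (N + 1)) : t.1 i ≤ t.1 (Fin.last N) :=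
  t.2.monotone (Fin.le_last i)

lemma Chain.zero_le {N : ℕ} (t : Chain N) (i : Fin (N + 1)) : t.1 0 ≤ t.1 i :=
  t.2.monotone (Fin.zero_le i)

lemma Chain.succ_pos {N : ℕ} (t : Chain N) (i : Fin N) : 0 < t.1 i.succ :=
  lt_of_le_of_lt (Nat.zero_le _) (t.2 (Fin.succ_pos i))

/-- Splitting off the largest entry, recorded by its gap to the preceding one. -/
def chainSnoc (N : ℕ) : Chain N × ℕ ≃ Chain (N + 1) where
  toFun p := ⟨Fin.snoc (α := fun _ => ℕ) p.1.1 (p.1.1 (Fin.last N) + 1 + p.2), by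
    rw [Fin.strictMono_iff_lt_succ]
    intro i
    refine Fin.lastCases ?_ (fun i => ?_) i
    · rw [Fin.snoc_castSucc, Fin.succ_last, Fin.snoc_last]
      omega
    · rw [Fin.snoc_castSucc, Fin.succ_castSucc, Fin.snoc_castSucc]
      exact p.1.2 (Fin.castSucc_lt_succ)⟩
  invFun t := (⟨fun i => t.1 i.castSucc, t.2.comp (Fin.strictMono_castSucc)⟩,
    t.1 (Fin.last (N + 1)) - t.1 (Fin.last N).castSucc - 1)
  left_inv p := by
    ext
    · simp
    · simp
      omega
  right_inv t := by
    ext i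
    have h : t.1 (Fin.last N).castSucc < t.1 (Fin.last (N + 1)) := t.2 (Fin.castSucc_lt_last _)
    refine Fin.lastCases ?_ (fun i => ?_) i
    · simp only [Fin.snoc_last]
      omega
    · simp only [Fin.snoc_castSucc]

lemma chainSnoc_castSucc {N : ℕ} (t : Chain N) (j : ℕ) (i : Fin (N + 1)) :
    (chainSnoc N (t, j)).1 i.castSucc = t.1 i := by
  simp [chainSnoc]

lemma chainSnoc_last {N : ℕ} (t : Chain N) (j : ℕ) :
    (chainSnoc N (t, j)).1 (Fin.last (N + 1)) = t.1 (Fin.last N) + 1 + j := by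
  simp [chainSnoc]

lemma chainSnoc_zero {N : ℕ} (t : Chain N) (j : ℕ) :
    (chainSnoc N (t, j)).1 0 = t.1 0 := chainSnoc_castSucc t j 0

/-- Splitting off the smallest entry. -/
def chainCons (N : ℕ) : (Σ t : Chain N, Fin (t.1 0)) ≃ Chain (N + 1) where
  toFun p := ⟨Fin.cons (α := fun _ => ℕ) (p.2 : ℕ) p.1.1, by
    rw [Fin.strictMono_iff_lt_succ]
    intro i
    refine Fin.cases ?_ (fun i => ?_) i
    · rw [Fin.castSucc_zero, Fin.cons_zero, Fin.cons_succ]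
      exact p.2.2
    · rw [← Fin.succ_castSucc, Fin.cons_succ, Fin.cons_succ]
      exact p.1.2 (Fin.castSucc_lt_succ)⟩
  invFun t := ⟨⟨fun i => t.1 i.succ, t.2.comp (Fin.strictMono_succ)⟩,
    ⟨t.1 0, t.2 (Fin.succ_pos 0)⟩⟩
  left_inv p := by
    rcases p with ⟨t, s⟩
    rfl
  right_inv t := by
    ext i
    refine Fin.cases ?_ (fun i => ?_) i <;> simp

lemma chainCons_succ {N : ℕ} (t : Chain N) (s : Fin (t.1 0)) (i : Fin (N + 1)) :
    (chainCons N ⟨t, s⟩).1 i.succ = t.1 i := by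
  simp [chainCons]

lemma chainCons_zero {N : ℕ} (t : Chain N) (s : Fin (t.1 0)) :
    (chainCons N ⟨t, s⟩).1 0 = s := by
  simp [chainCons]

lemma chainCons_last {N : ℕ} (t : Chain N) (s : Fin (t.1 0)) :
    (chainCons N ⟨t, s⟩).1 (Fin.last (N + 1)) = t.1 (Fin.last N) := chainCons_succ t s (Fin.last N)

/-- Adding one to every entry. -/
def chainShift {N : ℕ} (t : Chain N) : Chain N :=
  ⟨fun i => t.1 i + 1, fun _ _ h => Nat.add_lt_add_right (t.2 h) 1⟩

lemma chainShift_injective {N : ℕ} : Function.Injective (chainShift (N := N)) := by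
  intro t t' h
  ext i
  have := congrFun (congrArg Subtype.val h) i
  simpa [chainShift] using this

lemma exists_chainShift {N : ℕ} (t : Chain N) (h : t.1 0 ≠ 0) : ∃ t', chainShift t' = t := by
  have h1 : ∀ i, 0 < t.1 i := fun i => lt_of_lt_of_le (Nat.pos_of_ne_zero h) (t.zero_le i)
  refine ⟨⟨fun i => t.1 i - 1, fun i j hij => ?_⟩, ?_⟩
  · have := t.2 hij
    have := h1 i
    show t.1 i - 1 < t.1 j - 1
    omega
  · ext i
    have := h1 i
    show t.1 i - 1 + 1 = t.1 i
    omega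

/-! ### The summable majorant -/

/-- A majorant for all multiple series in the argument. Summing over the largest entry
reproduces the majorant of length one less, up to the factor `1 / a`. -/
noncomputable def major (a b : ℝ) {N : ℕ} (t : Chain N) : ℝ :=
  wt a (t.1 0) (t.1 (Fin.last N)) * (1 / (t.1 0 + b)) * ∏ i : Fin N, 1 / (t.1 i.succ : ℝ)

lemma major_nonneg {a b : ℝ} (ha : 0 < a) (hb : 0 < b) {N : ℕ} (t : Chain N) :
    0 ≤ major a b t := by
  unfold major
  have := wt_nonneg ha (t.1 0) (t.1 (Fin.last N))
  positivity

lemma summable_inv_mul_inv {a b : ℝ} (ha : 0 < a) (hb : 0 < b) :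
    Summable fun l : ℕ => 1 / (a + l) * (1 / ((l : ℝ) + b)) := by
  have h : Summable fun l : ℕ => (1 : ℝ) / (l : ℝ) ^ 2 :=
    Real.summable_one_div_nat_pow.2 one_lt_two
  rw [← summable_nat_add_iff 1] at h ⊢
  refine Summable.of_nonneg_of_le (fun l => by positivity) (fun l => ?_) h
  rw [one_div_mul_one_div, pow_two]
  push_cast
  apply one_div_le_one_div_of_le (by positivity)
  have hl : (0 : ℝ) ≤ l := l.cast_nonneg
  exact mul_le_mul (by linarith) (by linarith) (by linarith) (by linarith)

lemma summable_major {a b : ℝ} (ha : 0 < a) (hb : 0 < b) (N : ℕ) :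
    Summable fun t : Chain N => major a b t := by
  induction N with
  | zero =>
    have h := summable_inv_mul_inv ha hb
    have hi : Function.Injective fun t : Chain 0 => t.1 0 := by
      intro t t' h
      ext i
      have hi : i = 0 := Fin.fin_one_eq_zero i
      rw [hi]
      exact h
    refine (h.comp_injective hi).congr fun t => ?_
    simp [major, wt_self]
  | succ N ih =>
    have key : ∀ t : Chain N, HasSum (fun j => major a b (chainSnoc N (t, j)))
        (major a b t * (1 / a)) := by
      intro t
      have h := (hasSum_wt_real ha (t.zero_le (Fin.last N))).mul_right
        ((1 / (t.1 0 + b)) * ∏ i : Fin N, 1 / (t.1 i.succ : ℝ))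
      have e : major a b t * (1 / a) = wt a (t.1 0) (t.1 (Fin.last N)) / a
          * ((1 / (t.1 0 + b)) * ∏ i : Fin N, 1 / (t.1 i.succ : ℝ)) := by
        simp only [major]
        ring
      rw [e]
      refine h.congr_fun fun j => ?_
      simp only [major, chainSnoc_zero, chainSnoc_last, Fin.prod_univ_castSucc,
        Fin.succ_castSucc, chainSnoc_castSucc, Fin.succ_last]
      ring
    rw [← (chainSnoc N).summable_iff]
    refine (summable_prod_of_nonneg (f := fun p => major a b (chainSnoc N p))
      (fun p => major_nonneg ha hb _)).2 ⟨fun t => (key t).summable, ?_⟩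
    refine (ih.mul_right (1 / a)).congr fun t => ?_
    exact (key t).tsum_eq.symm

/-! ### The multiple series -/

/-- The tuple of the variables `1 / (t i + β)`. -/
noncomputable def xs (β : ℂ) {N : ℕ} (t : Chain N) (i : Fin (N + 1)) : ℂ := 1 / ((t.1 i : ℂ) + β)

/-- The inner sum over the exponents, for a fixed chain `t`: after pulling out one factor
`1 / (t i + β)` for each `i`, the exponents range over all tuples of sum `m`. -/
noncomputable def term (α β : ℂ) (m : ℕ) {N : ℕ} (t : Chain N) : ℂ :=
  wt α (t.1 0) (t.1 (Fin.last N)) * (∏ i, xs β t i) * hsym m (xs β t)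

lemma norm_xs_le {β : ℂ} {b : ℝ} (hb : 0 < b) (h : b ≤ β.re) {N : ℕ} (t : Chain N)
    (i : Fin (N + 1)) : ‖xs β t i‖ ≤ 1 / (t.1 i + b) := by
  have := le_norm_add h (t.1 i)
  rw [xs, norm_div, norm_one, add_comm _ β]
  gcongr
  linarith

lemma norm_xs_le_zero {β : ℂ} {b : ℝ} (hb : 0 < b) (h : b ≤ β.re) {N : ℕ} (t : Chain N)
    (i : Fin (N + 1)) : ‖xs β t i‖ ≤ 1 / (t.1 0 + b) := by
  refine (norm_xs_le hb h t i).trans ?_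
  have : (t.1 0 : ℝ) ≤ t.1 i := by exact_mod_cast t.zero_le i
  gcongr

lemma norm_xs_le_succ {β : ℂ} {b : ℝ} (hb : 0 < b) (h : b ≤ β.re) {N : ℕ} (t : Chain N)
    (i : Fin N) : ‖xs β t i.succ‖ ≤ 1 / t.1 i.succ := by
  refine (norm_xs_le hb h t _).trans ?_
  have : (0 : ℝ) < t.1 i.succ := by exact_mod_cast t.succ_pos i
  gcongr
  linarith

lemma norm_term_le {α β : ℂ} {a b : ℝ} (ha : 0 < a) (hb : 0 < b) (hα : a ≤ α.re) (hβ : b ≤ β.re)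
    (m : ℕ) {N : ℕ} (t : Chain N) :
    ‖term α β m t‖ ≤ ((Finset.univ : Finset (Fin (N + 1))).finsuppAntidiag m).card * (1 / b) ^ m
      * major a b t := by
  have h1 : ‖∏ i, xs β t i‖ ≤ (1 / (t.1 0 + b)) * ∏ i : Fin N, 1 / (t.1 i.succ : ℝ) := by
    rw [norm_prod, Fin.prod_univ_succ]
    gcongr
    · exact norm_xs_le hb hβ t 0
    · exact norm_xs_le_succ hb hβ t _
  have h2 : ‖hsym m (xs β t)‖ ≤
      ((Finset.univ : Finset (Fin (N + 1))).finsuppAntidiag m).card * (1 / b) ^ m := by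
    refine norm_hsym_le m fun i => (norm_xs_le hb hβ t i).trans ?_
    gcongr
    simp
  rw [term, norm_mul, norm_mul, mul_comm, major, mul_assoc (wt _ _ _)]
  have := norm_wt_le ha hα (t.1 0) (t.1 (Fin.last N))
  have := wt_nonneg ha (t.1 0) (t.1 (Fin.last N))
  gcongr

lemma summable_term {α β : ℂ} (hα : 0 < α.re) (hβ : 0 < β.re) (m N : ℕ) :
    Summable fun t : Chain N => term α β m t :=
  Summable.of_norm_bounded ((summable_major hα hβ N).mul_left _)
    fun t => norm_term_le hα hβ le_rfl le_rfl m t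

/-- Either of the two pieces into which `sub_mul_hsym` splits a summand is dominated by the
majorant; here `y` is the tuple of variables without its last or its first entry. -/
lemma summable_piece {α β : ℂ} (hα : 0 < α.re) (hβ : 0 < β.re) (m N : ℕ)
    (y : Chain (N + 1) → Fin (N + 1) → ℂ) (hy : ∀ t i, ∃ j, y t i = xs β t j) :
    Summable fun t : Chain (N + 1) =>
      wt α (t.1 0) (t.1 (Fin.last (N + 1))) / (t.1 (Fin.last (N + 1)) : ℂ)
        * (∏ i : Fin N, xs β t i.castSucc.succ) * hsym (m + 1) (y t) := by
  refine Summable.of_norm_bounded ((summable_major hα hβ (N + 1)).mul_left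
    (((Finset.univ : Finset (Fin (N + 1))).finsuppAntidiag (m + 1)).card * (1 / β.re) ^ m))
    fun t => ?_
  have h1 : ‖∏ i : Fin N, xs β t i.castSucc.succ‖
      ≤ ∏ i : Fin N, 1 / (t.1 i.castSucc.succ : ℝ) := by
    rw [norm_prod]
    gcongr
    exact norm_xs_le_succ hβ le_rfl t _
  have h2 : ‖hsym (m + 1) (y t)‖ ≤
      ((Finset.univ : Finset (Fin (N + 1))).finsuppAntidiag (m + 1)).card *
        ((1 / β.re) ^ m * (1 / (t.1 0 + β.re))) := by
    refine (norm_hsym_le (m + 1) (r := 1 / (t.1 0 + β.re)) fun i => ?_).trans ?_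
    · obtain ⟨j, hj⟩ := hy t i
      rw [hj]
      exact norm_xs_le_zero hβ le_rfl t j
    · rw [pow_succ]
      gcongr
      simp
  have h3 := norm_wt_le hα le_rfl (t.1 0) (t.1 (Fin.last (N + 1)))
  have h4 := wt_nonneg hα (t.1 0) (t.1 (Fin.last (N + 1)))
  rw [norm_mul, norm_mul, norm_div, Complex.norm_natCast]
  calc _ ≤ wt α.re (t.1 0) (t.1 (Fin.last (N + 1))) / (t.1 (Fin.last (N + 1)) : ℝ)
        * (∏ i : Fin N, 1 / (t.1 i.castSucc.succ : ℝ))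
        * (((Finset.univ : Finset (Fin (N + 1))).finsuppAntidiag (m + 1)).card *
        ((1 / β.re) ^ m * (1 / (t.1 0 + β.re)))) := by gcongr
    _ = _ := by
      rw [major, Fin.prod_univ_castSucc, Fin.succ_last]
      ring

lemma prod_castSucc_eq {β : ℂ} (hβ : 0 < β.re) {N : ℕ} (t : Chain N) :
    ∏ i : Fin N, xs β t i.castSucc = (t.1 (Fin.last N) + β) * ∏ i, xs β t i := by
  rw [Fin.prod_univ_castSucc (fun i => xs β t i)]
  have := re_ne hβ (t.1 (Fin.last N))
  rw [add_comm] at this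
  rw [xs.eq_def _ _ (Fin.last N)]
  field_simp

lemma prod_succ_eq {β : ℂ} (hβ : 0 < β.re) {N : ℕ} (t : Chain N) :
    ∏ i : Fin N, xs β t i.succ = (t.1 0 + β) * ∏ i, xs β t i := by
  rw [Fin.prod_univ_succ (fun i => xs β t i)]
  have := re_ne hβ (t.1 0)
  rw [add_comm] at this
  rw [xs.eq_def _ _ 0]
  field_simp

/-- The difference between the series at `(α, β)` and at `(α + 1, β + 1)`. The induction
lowers the length of the chains by one, raises the degree `m` by one, and costs a factor
`β / α`. -/
lemma hasSum_diff {α β : ℂ} (hα : 0 < α.re) (hβ : 0 < β.re) (N : ℕ) : ∀ m : ℕ,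
    HasSum (fun t : Chain N => term α β m t * (1 - (t.1 0 : ℂ) / (t.1 (Fin.last N) : ℂ)))
      (1 / (α ^ (N + 1) * β ^ (m + 1))) := by
  have hα0 : α ≠ 0 := by simpa using re_ne hα 0
  have hβ0 : β ≠ 0 := by simpa using re_ne hβ 0
  induction N with
  | zero =>
    intro m
    let t₀ : Chain 0 := ⟨fun _ => 0, fun i j h => absurd h (by omega)⟩
    convert hasSum_single (f := fun t : Chain 0 =>
      term α β m t * (1 - (t.1 0 : ℂ) / (t.1 (Fin.last 0) : ℂ))) t₀ ?_ using 1
    · have : hsym m (xs β t₀) = (1 / β) ^ m := by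
        simp [hsym, geomPS, xs, t₀]
      simp only [term, this]
      simp [wt_self, t₀, xs]
      field_simp
      ring
    · intro t ht
      have h0 : t.1 0 ≠ 0 := by
        intro h
        apply ht
        ext i
        have hi : i = 0 := Fin.fin_one_eq_zero i
        rw [hi, h]
      have : (t.1 0 : ℂ) ≠ 0 := by exact_mod_cast h0
      simp [div_self this]
  | succ N ih =>
    intro m
    -- The two pieces of the summand, without the last and without the first variable.
    set A : Chain (N + 1) → ℂ := fun t =>
      wt α (t.1 0) (t.1 (Fin.last (N + 1))) / (t.1 (Fin.last (N + 1)) : ℂ)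
        * (∏ i : Fin N, xs β t i.castSucc.succ) * hsym (m + 1) (fun i => xs β t i.castSucc) with hA
    set B : Chain (N + 1) → ℂ := fun t =>
      wt α (t.1 0) (t.1 (Fin.last (N + 1))) / (t.1 (Fin.last (N + 1)) : ℂ)
        * (∏ i : Fin N, xs β t i.castSucc.succ) * hsym (m + 1) (fun i => xs β t i.succ) with hB
    have sA : Summable A := summable_piece hα hβ m N _ fun t i => ⟨_, rfl⟩
    have sB : Summable B := summable_piece hα hβ m N _ fun t i => ⟨_, rfl⟩
    have hAB : (fun t : Chain (N + 1) =>
        term α β m t * (1 - (t.1 0 : ℂ) / (t.1 (Fin.last (N + 1)) : ℂ))) = fun t => A t - B t := by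
      ext t
      have h1 : (t.1 (Fin.last (N + 1)) : ℂ) ≠ 0 := by
        exact_mod_cast (t.succ_pos (Fin.last N)).ne'
      have h2 := re_ne hβ (t.1 0)
      have h3 := re_ne hβ (t.1 (Fin.last (N + 1)))
      rw [add_comm] at h2 h3
      have h4 := sub_mul_hsym m (xs β t)
      have h5 : (1 - (t.1 0 : ℂ) / (t.1 (Fin.last (N + 1)) : ℂ))
          * (xs β t 0 * xs β t (Fin.last (N + 1)))
          = (xs β t 0 - xs β t (Fin.last (N + 1))) / (t.1 (Fin.last (N + 1)) : ℂ) := by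
        simp only [xs]
        field_simp
        ring
      simp only [hA, hB, term]
      rw [← mul_sub, ← h4, Fin.prod_univ_succ, Fin.prod_univ_castSucc, Fin.succ_last]
      linear_combination wt α (t.1 0) (t.1 (Fin.last (N + 1)))
        * (∏ i : Fin N, xs β t i.castSucc.succ) * hsym m (xs β t) * h5
    -- Sum the first piece over the largest entry.
    have hAs : HasSum (fun t : Chain N => wt α (t.1 0) (t.1 (Fin.last N)) / α
        * (∏ i : Fin N, xs β t i.succ) * hsym (m + 1) (xs β t)) (∑' t, A t) := by
      refine HasSum.prod_fiberwise (f := A ∘ chainSnoc N)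
        ((chainSnoc N).hasSum_iff.2 sA.hasSum) fun t => ?_
      have h := ((hasSum_wt hα (t.zero_le (Fin.last N))).mul_right
        (∏ i : Fin N, xs β t i.succ)).mul_right (hsym (m + 1) (xs β t))
      refine h.congr_fun fun j => ?_
      have e : (fun i : Fin (N + 1) => xs β (chainSnoc N (t, j)) i.castSucc) = xs β t := by
        ext i
        simp only [xs, chainSnoc_castSucc]
      simp only [hA, Function.comp, chainSnoc_last, chainSnoc_zero, e, Fin.succ_castSucc]
      simp only [xs, chainSnoc_castSucc]
    -- Sum the second piece over the smallest entry.
    have hBs : HasSum (fun t : Chain N => wt α (t.1 0) (t.1 (Fin.last N)) * (t.1 0) / α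
        / (t.1 (Fin.last N)) * (∏ i : Fin N, xs β t i.castSucc) * hsym (m + 1) (xs β t))
        (∑' t, B t) := by
      refine HasSum.sigma (f := B ∘ chainCons N)
        ((chainCons N).hasSum_iff.2 sB.hasSum) fun t => ?_
      have h := hasSum_fintype (fun s : Fin (t.1 0) => (B ∘ chainCons N) ⟨t, s⟩)
      convert h using 1
      rw [← sum_wt_left (re_ne hα) _ (t.zero_le _), ← Fin.sum_univ_eq_sum_range
        (fun s => wt α s (t.1 (Fin.last N))), Finset.sum_div, Finset.sum_mul, Finset.sum_mul]
      refine Finset.sum_congr rfl fun s _ => ?_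
      have e : (fun i : Fin (N + 1) => xs β (chainCons N ⟨t, s⟩) i.succ) = xs β t := by
        ext i
        simp only [xs, chainCons_succ]
      simp only [hB, Function.comp, chainCons_last, chainCons_zero, e]
      simp only [xs, chainCons_succ]
    rw [hAB]
    have hterm : (fun t : Chain N => wt α (t.1 0) (t.1 (Fin.last N)) / α
        * (∏ i : Fin N, xs β t i.succ) * hsym (m + 1) (xs β t)
        - wt α (t.1 0) (t.1 (Fin.last N)) * (t.1 0) / α
        / (t.1 (Fin.last N)) * (∏ i : Fin N, xs β t i.castSucc) * hsym (m + 1) (xs β t))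
        = fun t => β / α * (term α β (m + 1) t
          * (1 - (t.1 0 : ℂ) / (t.1 (Fin.last N) : ℂ))) := by
      ext t
      rw [prod_castSucc_eq hβ, prod_succ_eq hβ, term]
      by_cases h0 : t.1 (Fin.last N) = 0
      · have h1 : t.1 0 = 0 := by
          have := t.zero_le (Fin.last N)
          omega
        simp only [h0, h1]
        simp
        ring
      · have h1 : (t.1 (Fin.last N) : ℂ) ≠ 0 := by exact_mod_cast h0
        field_simp
        ring
    have h := hAs.sub hBs
    rw [hterm] at h
    have hdiff := sA.hasSum.sub sB.hasSum
    rw [h.unique ((ih (m + 1)).mul_left (β / α))] at hdiff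
    have e : 1 / (α ^ (N + 1 + 1) * β ^ (m + 1))
        = β / α * (1 / (α ^ (N + 1) * β ^ (m + 1 + 1))) := by
      field_simp
      ring
    rw [e]
    exact hdiff

/-! ### Telescoping in the parameters -/

lemma term_add_one {α β : ℂ} (m : ℕ) {N : ℕ} (t : Chain N) :
    term (α + 1) (β + 1) m t = term α β m (chainShift t)
      * (((chainShift t).1 0 : ℂ) / ((chainShift t).1 (Fin.last N) : ℂ)) := by
  have h1 : xs (β + 1) t = xs β (chainShift t) := by
    ext i
    simp only [xs, chainShift]
    push_cast
    ring
  simp only [term, h1, wt_add_one]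
  simp only [chainShift]
  push_cast
  ring

lemma tsum_term_add_one {α β : ℂ} (hα : 0 < α.re) (hβ : 0 < β.re) (m N : ℕ) :
    ∑' t : Chain N, term α β m t
      = ∑' t : Chain N, term (α + 1) (β + 1) m t + 1 / (α ^ (N + 1) * β ^ (m + 1)) := by
  have h1 : ∑' t : Chain N, term (α + 1) (β + 1) m t
      = ∑' t : Chain N, term α β m t * ((t.1 0 : ℂ) / (t.1 (Fin.last N) : ℂ)) := by
    rw [← chainShift_injective.tsum_eq (f := fun t : Chain N =>
      term α β m t * ((t.1 0 : ℂ) / (t.1 (Fin.last N) : ℂ)))]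
    · exact tsum_congr fun t => term_add_one m t
    · intro t ht
      refine exists_chainShift t fun h => ht ?_
      simp [h]
  have h2 := hasSum_diff hα hβ N m
  have h3 := (summable_term hα hβ m N).hasSum.sub h2
  rw [h1, ← sub_eq_iff_eq_add, ← h3.tsum_eq]
  exact tsum_congr fun t => by ring

lemma tsum_term_add_nat {α β : ℂ} (hα : 0 < α.re) (hβ : 0 < β.re) (m N L : ℕ) :
    ∑' t : Chain N, term α β m t
      = ∑' t : Chain N, term (α + L) (β + L) m t
        + ∑ l ∈ Finset.range L, 1 / (((l : ℂ) + α) ^ (N + 1) * ((l : ℂ) + β) ^ (m + 1)) := by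
  induction L with
  | zero => simp
  | succ L ih =>
    have h1 : 0 < (α + L).re := by
      simp only [Complex.add_re, Complex.natCast_re]; positivity
    have h2 : 0 < (β + L).re := by
      simp only [Complex.add_re, Complex.natCast_re]; positivity
    rw [ih, tsum_term_add_one h1 h2, Finset.sum_range_succ]
    push_cast
    rw [add_assoc α, add_assoc β, add_comm (L : ℂ) α, add_comm (L : ℂ) β]
    ring

lemma tendsto_tsum_term {α β : ℂ} (hα : 0 < α.re) (hβ : 0 < β.re) (m N : ℕ) :
    Filter.Tendsto (fun L : ℕ => ∑' t : Chain N, term (α + L) (β + L) m t)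
      Filter.atTop (nhds 0) := by
  have hle : ∀ (z : ℂ) (L : ℕ), (z + L).re = z.re + L := fun z L => by simp
  rw [← tsum_zero (α := ℂ) (β := Chain N)]
  refine tendsto_tsum_of_dominated_convergence ((summable_major hα hβ N).mul_left
    (((Finset.univ : Finset (Fin (N + 1))).finsuppAntidiag m).card * (1 / β.re) ^ m)) ?_ ?_
  · intro t
    have h1 : ∀ c : ℝ, Filter.Tendsto (fun L : ℕ => 1 / (c + (β.re + L)))
        Filter.atTop (nhds 0) := by
      intro c
      refine tendsto_const_nhds.div_atTop ?_
      exact Filter.tendsto_atTop_add_const_left _ _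
        (Filter.tendsto_atTop_add_const_left _ _ tendsto_natCast_atTop_atTop)
    have h2 : Filter.Tendsto (fun L : ℕ =>
        ((Finset.univ : Finset (Fin (N + 1))).finsuppAntidiag m).card * (1 / (β.re + L)) ^ m
          * major α.re (β.re + L) t) Filter.atTop (nhds 0) := by
      have h3 := (((h1 0).pow m).const_mul
        (((Finset.univ : Finset (Fin (N + 1))).finsuppAntidiag m).card : ℝ)).mul
        ((((h1 (t.1 0)).const_mul (wt α.re (t.1 0) (t.1 (Fin.last N)))).mul_const
          (∏ i : Fin N, 1 / (t.1 i.succ : ℝ))))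
      simpa [major] using h3
    refine squeeze_zero_norm (fun L => ?_) h2
    exact norm_term_le hα (by positivity) (by rw [hle]; simp) (by rw [hle]) m t
  · exact Filter.Eventually.of_forall fun L t =>
      norm_term_le hα hβ (by rw [hle]; simp) (by rw [hle]; simp) m t

lemma tsum_eq_tsum_term {α β : ℂ} (hα : 0 < α.re) (hβ : 0 < β.re) (m N : ℕ) :
    ∑' l : ℕ, 1 / (((l : ℂ) + α) ^ (N + 1) * ((l : ℂ) + β) ^ (m + 1))
      = ∑' t : Chain N, term α β m t := by
  have hs : Summable fun l : ℕ =>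
      1 / (((l : ℂ) + α) ^ (N + 1) * ((l : ℂ) + β) ^ (m + 1)) := by
    refine Summable.of_norm_bounded ((summable_inv_mul_inv hα hβ).mul_left
      ((1 / α.re) ^ N * (1 / β.re) ^ m)) fun l => ?_
    have h1 := le_norm_add (le_refl α.re) l
    have h2 := le_norm_add (le_refl β.re) l
    have hl : (0 : ℝ) ≤ l := l.cast_nonneg
    have e : (1 / α.re) ^ N * (1 / β.re) ^ m * (1 / (α.re + l) * (1 / ((l : ℝ) + β.re)))
      = 1 / ((α.re ^ N * (α.re + l)) * (β.re ^ m * (β.re + l))) := by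
      rw [add_comm (l : ℝ), one_div_pow, one_div_pow]
      field_simp
    rw [e, norm_div, norm_one, norm_mul, norm_pow, norm_pow, pow_succ, pow_succ,
      add_comm (l : ℂ), add_comm (l : ℂ)]
    gcongr
    · linarith
    · linarith
  have h1 := hs.hasSum.tendsto_sum_nat
  refine tendsto_nhds_unique h1 ?_
  have h2 := (tendsto_tsum_term hα hβ m N).const_sub (∑' t : Chain N, term α β m t)
  rw [sub_zero] at h2
  refine h2.congr fun L => ?_
  rw [tsum_term_add_nat hα hβ m N L]
  ring

/-- Exponent tuples with entries `≥ 1` and sum `m + N + 1`, lowered by one in each entry. -/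
noncomputable def expEquiv (m N : ℕ) :
    {l : Fin (N + 1) →₀ ℕ // l ∈ (Finset.univ : Finset (Fin (N + 1))).finsuppAntidiag m} ≃
      {k : Fin (N + 1) → ℕ // (∀ i, 1 ≤ k i) ∧ ∑ i, k i = m + 1 + (N + 1) - 1} where
  toFun l := ⟨fun i => l.1 i + 1, fun i => Nat.le_add_left 1 _, by
    have h := (Finset.mem_finsuppAntidiag.1 l.2).1
    rw [Finset.sum_add_distrib, h]
    simp
    omega⟩
  invFun k := ⟨Finsupp.equivFunOnFinite.symm fun i => k.1 i - 1, by
    rw [Finset.mem_finsuppAntidiag]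
    refine ⟨?_, Finset.subset_univ _⟩
    have h : ∑ i, (k.1 i - 1) + ∑ i : Fin (N + 1), 1 = ∑ i, k.1 i := by
      rw [← Finset.sum_add_distrib]
      exact Finset.sum_congr rfl fun i _ => Nat.sub_add_cancel (k.2.1 i)
    rw [k.2.2] at h
    simp at h
    simp only [Finsupp.equivFunOnFinite_symm_apply_apply]
    omega⟩
  left_inv l := by
    ext i
    simp
  right_inv k := by
    ext i
    simp only [Finsupp.equivFunOnFinite_symm_apply_apply]
    exact Nat.sub_add_cancel (k.2.1 i)

lemma summable_monomial {α β : ℂ} (hα : 0 < α.re) (hβ : 0 < β.re) {N : ℕ} (l : Fin (N + 1) → ℕ) :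
    Summable fun t : Chain N =>
      wt α (t.1 0) (t.1 (Fin.last N)) * ∏ i, xs β t i ^ (l i + 1) := by
  refine Summable.of_norm_bounded ((summable_major hα hβ N).mul_left (∏ i, (1 / β.re) ^ l i))
    fun t => ?_
  have h1 : ‖∏ i, xs β t i ^ (l i + 1)‖ ≤ (∏ i, (1 / β.re) ^ l i) *
      ((1 / (t.1 0 + β.re)) * ∏ i : Fin N, 1 / (t.1 i.succ : ℝ)) := by
    simp_rw [pow_succ]
    rw [Finset.prod_mul_distrib, norm_mul, norm_prod, norm_prod,
      Fin.prod_univ_succ (fun i => ‖xs β t i‖)]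
    gcongr with i _ i _
    · rw [norm_pow]
      gcongr
      refine (norm_xs_le hβ le_rfl t i).trans ?_
      gcongr
      simp
    · exact norm_xs_le hβ le_rfl t 0
    · exact norm_xs_le_succ hβ le_rfl t _
  have h2 := norm_wt_le hα le_rfl (t.1 0) (t.1 (Fin.last N))
  have h3 := wt_nonneg hα (t.1 0) (t.1 (Fin.last N))
  rw [norm_mul, major]
  calc _ ≤ wt α.re (t.1 0) (t.1 (Fin.last N)) * ((∏ i, (1 / β.re) ^ l i) *
      ((1 / (t.1 0 + β.re)) * ∏ i : Fin N, 1 / (t.1 i.succ : ℝ))) := by gcongr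
    _ = _ := by ring

/-- Proposition 1: for integers `m, n ≥ 1` and `α, β ∈ ℂ` with `Re α > 0`, `Re β > 0`,
`∑_{l≥0} 1/((l+α)^n (l+β)^m)` equals the sum over all tuples `(k₁,…,kₙ)` of positive
integers with `k₁+⋯+kₙ = m+n-1` of
`∑_{0≤m₁<⋯<mₙ} ((α)_{m₁}/m₁!) (mₙ!/(α)_{mₙ+1}) ∏ⱼ 1/(mⱼ+β)^{kⱼ}`. -/
theorem stmt_0 (m n : ℕ) (hm : 1 ≤ m) (hn : 1 ≤ n) (α β : ℂ)
    (hα : 0 < α.re) (hβ : 0 < β.re) :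
    ∑' l : ℕ, 1 / (((l : ℂ) + α) ^ n * ((l : ℂ) + β) ^ m)
      = ∑' k : {k : Fin n → ℕ // (∀ i, 1 ≤ k i) ∧ ∑ i, k i = m + n - 1},
          ∑' t : {t : Fin n → ℕ // StrictMono t},
            poch α (t.1 ⟨0, hn⟩) / (Nat.factorial (t.1 ⟨0, hn⟩) : ℂ)
              * ((Nat.factorial (t.1 ⟨n - 1, by omega⟩) : ℂ)
                  / poch α (t.1 ⟨n - 1, by omega⟩ + 1))
              * ∏ i, 1 / (((t.1 i : ℂ) + β) ^ (k.1 i)) := by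
  obtain ⟨N, rfl⟩ : ∃ N, n = N + 1 := ⟨n - 1, by omega⟩
  obtain ⟨M, rfl⟩ : ∃ M, m = M + 1 := ⟨m - 1, by omega⟩
  rw [tsum_eq_tsum_term hα hβ, ← (expEquiv M N).tsum_eq]
  have h1 : ∀ (k : Fin (N + 1) → ℕ) (t : Chain N),
      poch α (t.1 ⟨0, hn⟩) / (Nat.factorial (t.1 ⟨0, hn⟩) : ℂ)
              * ((Nat.factorial (t.1 ⟨N + 1 - 1, by omega⟩) : ℂ)
                  / poch α (t.1 ⟨N + 1 - 1, by omega⟩ + 1))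
              * ∏ i, 1 / (((t.1 i : ℂ) + β) ^ (k i))
      = wt α (t.1 0) (t.1 (Fin.last N)) * ∏ i, xs β t i ^ k i := by
    intro k t
    rw [← poch_mul_eq_wt (re_ne hα) (t.zero_le (Fin.last N))]
    simp only [xs, one_div, inv_pow]
    rfl
  simp only [h1]
  simp only [expEquiv, Equiv.coe_fn_mk]
  rw [Finset.tsum_subtype ((Finset.univ : Finset (Fin (N + 1))).finsuppAntidiag M)
    (fun l => ∑' t : Chain N, wt α (t.1 0) (t.1 (Fin.last N)) * ∏ i, xs β t i ^ (l i + 1)),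
    ← Summable.tsum_finsetSum (f := fun (l : Fin (N + 1) →₀ ℕ) (t : Chain N) =>
      wt α (t.1 0) (t.1 (Fin.last N)) * ∏ i, xs β t i ^ (l i + 1))
      fun l _ => summable_monomial hα hβ l]
  refine tsum_congr fun t => ?_
  rw [term, hsym_eq_sum, Finset.mul_sum]
  refine Finset.sum_congr rfl fun l _ => ?_
  simp_rw [pow_succ]
  rw [Finset.prod_mul_distrib]
  ring
end

section
/- For all integers k, n with 0 < n < k and every complex number α with Re α > 0, the identity ζ(k; α) = ∑_{k₁+⋯+kₙ = k, kᵢ ∈ ℤ_{≥1}, kₙ ≥ 2} ∑_{0 ≤ m₁ < ⋯ < mₙ} ((α)_{m₁}/m₁!) · (mₙ!/(α)_{mₙ}) · 1/((m₁+α)^{k₁} ⋯ (mₙ+α)^{kₙ}) holds, where the outer sum on the right is over all n-tuples of positive integers (k₁,…,kₙ) with k₁+⋯+kₙ = k and kₙ ≥ 2. -/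
/-!
For a fixed depth `n`, the claims for all weights `k` are equivalent to one identity between
generating functions in a variable `x`. With `γ = α - x` it reads

`∑_m 1/((m+α)^n (m+γ))
  = ∑_{t₁<⋯<tₙ} (α)_{t₁}/t₁! · tₙ!/((α)_{tₙ} (tₙ+α)) · ∏ᵢ 1/(tᵢ+γ)`   (`hasSum_chain_main`).

It is proved by the connected-sum method, with the connector (`conn`)

`C(m,p) = (α)_m/m! · (m+γ)(p+γ) · (γ)_m (γ)_p / (1+α+γ)_{m+p}`.

Consider the sum of `(α)_{t₁}/t₁! · ∏ᵢ 1/(tᵢ+γ) · C(m,tₙ) · 1/(m+γ)` over all `m` and all chains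
`t₁ < ⋯ < tₙ`. Summing over the chain first, `∑_{q>p} C(m,q)/(q+γ) = C(m,p)/(m+α)`
(`hasSum_conn`, a telescoping series) turns each of `tₙ, …, t₂` into a factor `1/(m+α)`, and the
sum over `t₁` is a Gauss series with value `κ/(m+α)` (`hasSum_conn_first`). Summing over `m` first
gives again a Gauss series, with value `κ tₙ!/((α)_{tₙ} (tₙ+α))` (`hasSum_conn_left`). The constant
`κ` is the same in both and does not vanish (`gaussConst_ne_zero`), so it cancels; its value is
never needed, because the dependence of the Gauss series on `m` follows from a contiguity relation
(`gaussSer_succ`, `gaussSer_mul`). The interchange of summations is justified by domination: passing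
from `α`, `γ` to their real parts costs a bounded factor (`exists_norm_poch_le`), and for real
parameters all terms are nonnegative (`summable_real_joint`).

For `|x| < Re α / 2` both sides of the identity are expanded in powers of `x` (`hasSum_hurwitz`,
`hasSum_chainSum`), and comparing the coefficients of `x^j` gives the theorem for weight
`k = n + 1 + j`, the exponents being shifted by the minimal ones `(1, …, 1, 2)`
(`hurwitz_eq_tsum_chainSum`, `exponentEquiv`).
-/

open scoped BigOperators

/-! ### Bounds for Pochhammer symbols -/

/-- The Pochhammer symbol over the reals. -/
noncomputable def rpoch (a : ℝ) (m : ℕ) : ℝ := ∏ i ∈ Finset.range m, (a + i)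

lemma poch_zero (a : ℂ) : poch a 0 = 1 := by simp [poch]

lemma poch_succ (a : ℂ) (m : ℕ) : poch a (m + 1) = poch a m * (a + m) := by
  simp [poch, Finset.prod_range_succ]

lemma rpoch_zero (a : ℝ) : rpoch a 0 = 1 := by simp [rpoch]

lemma rpoch_succ (a : ℝ) (m : ℕ) : rpoch a (m + 1) = rpoch a m * (a + m) := by
  simp [rpoch, Finset.prod_range_succ]

lemma poch_ofReal (a : ℝ) (m : ℕ) : poch (a : ℂ) m = (rpoch a m : ℝ) := by
  simp [poch, rpoch]

lemma rpoch_pos {a : ℝ} (ha : 0 < a) (m : ℕ) : 0 < rpoch a m :=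
  Finset.prod_pos fun i _ => by positivity

lemma rpoch_add (a : ℝ) (m p : ℕ) : rpoch a (m + p) = rpoch a m * rpoch (a + m) p := by
  simp [rpoch, Finset.prod_range_add, add_assoc]

lemma poch_add (a : ℂ) (m p : ℕ) : poch a (m + p) = poch a m * poch (a + m) p := by
  simp [poch, Finset.prod_range_add, add_assoc]

lemma rpoch_mono {a b : ℝ} (ha : 0 < a) (hab : a ≤ b) (m : ℕ) : rpoch a m ≤ rpoch b m :=
  Finset.prod_le_prod (fun i _ => by positivity) (fun i _ => by linarith)

lemma re_add_le_norm (z : ℂ) (j : ℕ) : z.re + j ≤ ‖z + j‖ := by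
  have := Complex.re_le_norm (z + j)
  simpa using this

lemma natCast_add_ne_zero {z : ℂ} (hz : 0 < z.re) (j : ℕ) : (j : ℂ) + z ≠ 0 := by
  intro h
  have := congrArg Complex.re h
  simp at this
  have : (0 : ℝ) ≤ j := j.cast_nonneg
  linarith

lemma add_natCast_ne_zero {z : ℂ} (hz : 0 < z.re) (j : ℕ) : z + (j : ℂ) ≠ 0 := by
  rw [add_comm]; exact natCast_add_ne_zero hz j

lemma rpoch_le_norm {z : ℂ} (hz : 0 < z.re) (p : ℕ) : rpoch z.re p ≤ ‖poch z p‖ := by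
  rw [poch, norm_prod]
  exact Finset.prod_le_prod (fun i _ => by positivity) (fun i _ => re_add_le_norm z i)

lemma poch_ne_zero {z : ℂ} (hz : 0 < z.re) (p : ℕ) : poch z p ≠ 0 :=
  Finset.prod_ne_zero_iff.2 fun i _ => add_natCast_ne_zero hz i

lemma summable_inv_sq {s : ℝ} (hs : 0 < s) : Summable fun j : ℕ => 1 / (s + j) ^ 2 := by
  have := (Real.summable_one_div_nat_add_rpow s 2).2 (by norm_num)
  refine this.congr fun j => ?_
  rw [abs_of_pos (by positivity), add_comm (j : ℝ)]
  norm_num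

/-- Together with `rpoch_le_norm` this says that replacing the parameter of a Pochhammer symbol
by its real part changes the modulus by a bounded factor only: the quotient is at most
`∏ (1 + (Im z)² / (Re z + j)²)`, a convergent product. -/
lemma exists_norm_poch_le {z : ℂ} (hz : 0 < z.re) :
    ∃ K : ℝ, 0 < K ∧ ∀ p, ‖poch z p‖ ≤ K * rpoch z.re p := by
  have hs := (summable_inv_sq hz).mul_left (z.im ^ 2)
  refine ⟨Real.exp (∑' j : ℕ, z.im ^ 2 * (1 / (z.re + j) ^ 2)), Real.exp_pos _, fun p => ?_⟩
  have h1 : ∏ i ∈ Finset.range p, (1 + z.im ^ 2 * (1 / (z.re + i) ^ 2)) ≤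
      Real.exp (∑' j : ℕ, z.im ^ 2 * (1 / (z.re + j) ^ 2)) := by
    refine (Real.prod_one_add_le_exp_sum _ ?_).trans ?_
    · intro i; positivity
    · exact Real.exp_le_exp.2 (hs.sum_le_tsum _ (fun i _ => by positivity))
  refine le_trans ?_ (mul_le_mul_of_nonneg_right h1 (rpoch_pos hz p).le)
  rw [poch, norm_prod, rpoch, ← Finset.prod_mul_distrib]
  refine Finset.prod_le_prod (fun i _ => norm_nonneg _) (fun i _ => ?_)
  have hp : 0 < z.re + i := by positivity
  refine le_of_sq_le_sq ?_ (by positivity)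
  rw [Complex.sq_norm, Complex.normSq_apply]
  simp only [Complex.add_re, Complex.natCast_re, Complex.add_im, Complex.natCast_im, add_zero]
  have : (1 + z.im ^ 2 * (1 / (z.re + i) ^ 2)) * (z.re + i)
      = (z.re + i) + z.im ^ 2 / (z.re + i) := by field_simp
  rw [this]
  have h2 : ((z.re + i) + z.im ^ 2 / (z.re + i)) ^ 2
      = (z.re + i) ^ 2 + 2 * z.im ^ 2 + (z.im ^ 2 / (z.re + i)) ^ 2 := by field_simp; ring
  rw [h2]
  nlinarith [sq_nonneg (z.im ^ 2 / (z.re + i)), sq_nonneg z.im]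

/-- The terms `(α)_p (γ)_p / (p! (1+α+γ)_p)` of the Gauss series are `O(p⁻²)`. The constants
come from requiring that `(p+s)(p+s+1)` times the term be eventually nonincreasing, which holds
for `s = αγ+α+γ+1`. -/
lemma exists_gauss_term_le {α γ : ℝ} (hα : 0 < α) (hγ : 0 < γ) :
    ∃ K : ℝ, 0 < K ∧ ∀ p : ℕ, rpoch α p * rpoch γ p / (p.factorial * rpoch (1 + α + γ) p)
      ≤ K / (p + 1 : ℝ) ^ 2 := by
  set T : ℕ → ℝ := fun p => rpoch α p * rpoch γ p / (p.factorial * rpoch (1 + α + γ) p) with hT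
  have hTpos : ∀ p, 0 < T p := fun p => by
    have := rpoch_pos hα p
    have := rpoch_pos hγ p
    have := rpoch_pos (show 0 < 1 + α + γ by positivity) p
    simp only [hT]; positivity
  have hTs : ∀ p : ℕ, T (p + 1) * ((p + 1) * (1 + α + γ + p)) = T p * ((α + p) * (γ + p)) := by
    intro p
    have := (rpoch_pos (show 0 < 1 + α + γ by positivity) p).ne'
    have h3 : (1 + α + γ + p) ≠ 0 := by positivity
    simp only [hT, rpoch_succ, Nat.factorial_succ]
    push_cast
    field_simp
  set s : ℝ := α * γ + α + γ + 1 with hs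
  have hs0 : 0 < s := by positivity
  obtain ⟨P, hP⟩ := exists_nat_ge (s + 2)
  have hdec : ∀ p, P ≤ p → (p + 1 + s) * (p + 1 + s + 1) * T (p + 1) ≤ (p + s) * (p + s + 1) * T p := by
    intro p hp
    have hp' : s + 2 ≤ p := hP.trans (by exact_mod_cast hp)
    have hden : (0 : ℝ) < (p + 1) * (1 + α + γ + p) := by positivity
    refine le_of_mul_le_mul_right ?_ hden
    have e1 : (p + 1 + s) * (p + 1 + s + 1) * T (p + 1) * ((p + 1) * (1 + α + γ + p))
        = ((p + 1 + s) * T p) * ((p + s + 2) * ((α + p) * (γ + p))) := by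
      linear_combination (p + 1 + s) * (p + 1 + s + 1) * hTs p
    have e2 : (p + s) * (p + s + 1) * T p * ((p + 1) * (1 + α + γ + p))
        = ((p + 1 + s) * T p) * ((p + s) * ((p + 1) * (1 + α + γ + p))) := by ring
    rw [e1, e2]
    refine mul_le_mul_of_nonneg_left ?_ (by have := (hTpos p).le; positivity)
    have e3 : (p + s) * ((p + 1) * (1 + α + γ + p)) - (p + s + 2) * ((α + p) * (γ + p))
      = (2 + s) * p + (1 + α + γ) * s - α * γ * (s + 2) := by rw [hs]; ring
    have h1 : α * γ * (s + 2) ≤ s * p := by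
      have : α * γ ≤ s := by rw [hs]; nlinarith
      exact mul_le_mul this hp' (by positivity) hs0.le
    nlinarith [mul_pos (show 0 < 1 + α + γ by positivity) hs0]
  have hbd : ∀ p, P ≤ p → (p + s) * (p + s + 1) * T p ≤ (P + s) * (P + s + 1) * T P := by
    intro p hp
    induction p, hp using Nat.le_induction with
    | base => exact le_rfl
    | succ p hp ih => push_cast; exact (hdec p hp).trans ih
  have hsum : ∀ p ∈ Finset.range P, 0 ≤ (p + 1 : ℝ) ^ 2 * T p := fun p _ => by
    have := (hTpos p).le; positivity
  refine ⟨(P + s) * (P + s + 1) * T P + ∑ p ∈ Finset.range P, (p + 1 : ℝ) ^ 2 * T p, ?_, ?_⟩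
  · have := hTpos P
    have := Finset.sum_nonneg hsum
    positivity
  · intro p
    rw [le_div_iff₀ (by positivity), mul_comm]
    change (p + 1 : ℝ) ^ 2 * T p ≤ _
    have hPT : 0 ≤ (P + s) * (P + s + 1) * T P := by have := (hTpos P).le; positivity
    rcases lt_or_ge p P with h | h
    · have := Finset.single_le_sum hsum (Finset.mem_range.2 h)
      linarith
    · have h0 := Finset.sum_nonneg hsum
      have hs1 : 1 ≤ s := by rw [hs]; nlinarith [mul_pos hα hγ]
      have : (p + 1 : ℝ) ^ 2 * T p ≤ (p + s) * (p + s + 1) * T p := by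
        refine mul_le_mul_of_nonneg_right ?_ (hTpos p).le
        have : (0 : ℝ) ≤ p := p.cast_nonneg
        nlinarith
      linarith [hbd p h]

/-- The reciprocal is `γ⁻¹ ∏ (1 + α / (j+1+γ))`, which dominates a divergent harmonic sum. -/
lemma tendsto_rpoch_div {α γ : ℝ} (hα : 0 < α) (hγ : 0 < γ) :
    Filter.Tendsto (fun p : ℕ => rpoch γ (p + 1) / rpoch (1 + α + γ) p) Filter.atTop (nhds 0) := by
  have hV : ∀ p : ℕ, 1 + ∑ j ∈ Finset.range p, α * (1 / (j + (1 + γ)))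
      ≤ rpoch (1 + α + γ) p / (rpoch γ (p + 1) / γ) := by
    intro p
    induction p with
    | zero => simp [rpoch_succ, rpoch_zero, hγ.ne']
    | succ p ih =>
      have h1 := rpoch_pos hγ (p + 1)
      have hq : (0 : ℝ) < p + (1 + γ) := by positivity
      have e : rpoch (1 + α + γ) (p + 1) / (rpoch γ (p + 1 + 1) / γ)
          = rpoch (1 + α + γ) p / (rpoch γ (p + 1) / γ) * (1 + α * (1 / (p + (1 + γ)))) := by
        rw [rpoch_succ, rpoch_succ γ (p + 1)]
        push_cast
        have : γ + (p + 1) ≠ 0 := by positivity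
        field_simp
        ring
      rw [e, Finset.sum_range_succ]
      have h0 : 0 ≤ ∑ j ∈ Finset.range p, α * (1 / ((j : ℝ) + (1 + γ))) :=
        Finset.sum_nonneg fun j _ => by positivity
      have h2 : 0 < α * (1 / (p + (1 + γ))) := by positivity
      nlinarith
  have hdiv : Filter.Tendsto (fun p : ℕ => ∑ j ∈ Finset.range p, (1 / ((j : ℝ) + (1 + γ))))
      Filter.atTop Filter.atTop := by
    rw [← not_summable_iff_tendsto_nat_atTop_of_nonneg (fun j => by positivity)]
    intro h
    have := (Real.summable_one_div_nat_add_rpow (1 + γ) 1).1 (h.congr fun j => by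
      rw [abs_of_pos (by positivity), Real.rpow_one])
    exact lt_irrefl _ this
  have h3 : Filter.Tendsto (fun p : ℕ => rpoch (1 + α + γ) p / (rpoch γ (p + 1) / γ))
      Filter.atTop Filter.atTop := by
    refine Filter.tendsto_atTop_mono hV ?_
    refine Filter.tendsto_atTop_add_const_left _ _ ?_
    simp_rw [← Finset.mul_sum]
    exact hdiv.const_mul_atTop hα
  have h4 := (h3.inv_tendsto_atTop).const_mul γ
  rw [mul_zero] at h4
  refine h4.congr fun p => ?_
  have := (rpoch_pos hγ (p + 1)).ne'
  have := (rpoch_pos (show 0 < 1 + α + γ by positivity) p).ne'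
  simp only [Pi.inv_apply]
  field_simp

/-- The partial sums telescope, with primitive `-(γ)_{p+1} / (α (1+α+γ)_p)`. -/
lemma summable_rpoch_div {α γ : ℝ} (hα : 0 < α) (hγ : 0 < γ) :
    Summable (fun p : ℕ => rpoch γ p / rpoch (1 + α + γ) p) := by
  have hc : 0 < 1 + α + γ := by positivity
  have hS : ∀ p, 0 ≤ rpoch γ p / rpoch (1 + α + γ) p := fun p =>
    div_nonneg (rpoch_pos hγ p).le (rpoch_pos hc p).le
  rw [← summable_nat_add_iff 1]
  have key : ∀ N : ℕ, ∑ p ∈ Finset.range N, rpoch γ (p + 1) / rpoch (1 + α + γ) (p + 1)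
      = (γ - rpoch γ (N + 1) / rpoch (1 + α + γ) N) / α := by
    intro N
    induction N with
    | zero => simp [rpoch_succ, rpoch_zero]
    | succ N ih =>
      rw [Finset.sum_range_succ, ih, rpoch_succ γ (N + 1), rpoch_succ (1 + α + γ) N]
      have h1 := (rpoch_pos hc N).ne'
      have h2 : 1 + α + γ + N ≠ 0 := by positivity
      push_cast
      field_simp
      ring
  refine summable_of_sum_range_le (c := γ / α) (fun p => hS _) fun N => ?_
  rw [key]
  have : 0 ≤ rpoch γ (N + 1) / rpoch (1 + α + γ) N :=
    div_nonneg (rpoch_pos hγ _).le (rpoch_pos hc _).le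
  gcongr
  linarith

/-! ### Gauss series and the connector -/

/-- The coefficient `(α)_p / p!`. -/
noncomputable def pochQuot (α : ℂ) (p : ℕ) : ℂ := poch α p / (p.factorial : ℂ)

/-- The symmetric kernel `(γ)_m (γ)_p / (1+α+γ)_{m+p}`. -/
noncomputable def kern (α γ : ℂ) (m p : ℕ) : ℂ :=
  poch γ m * poch γ p / poch (1 + α + γ) (m + p)

/-- The connector `(α)_m / m! · (m+γ)(p+γ) · (γ)_m (γ)_p / (1+α+γ)_{m+p}`. -/
noncomputable def conn (α γ : ℂ) (m p : ℕ) : ℂ :=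
  pochQuot α m * (m + γ) * (p + γ) * kern α γ m p

/-- The Gauss series `∑_p (α)_p / p! · (γ)_m (γ)_p / (1+α+γ)_{m+p}`. -/
noncomputable def gaussSer (α γ : ℂ) (m : ℕ) : ℂ := ∑' p, pochQuot α p * kern α γ m p

lemma kern_symm (α γ : ℂ) (m p : ℕ) : kern α γ m p = kern α γ p m := by
  rw [kern, kern, mul_comm (poch γ m), add_comm m p]

section

variable {α γ : ℂ}

lemma re_one_add (hα : 0 < α.re) (hγ : 0 < γ.re) : 0 < (1 + α + γ).re := by
  simp; positivity

lemma pochQuot_succ (p : ℕ) : pochQuot α (p + 1) * (p + 1) = pochQuot α p * (α + p) := by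
  have : (p.factorial : ℂ) ≠ 0 := by exact_mod_cast p.factorial_ne_zero
  have h2 : (p : ℂ) + 1 ≠ 0 := by exact_mod_cast p.succ_ne_zero
  rw [pochQuot, pochQuot, poch_succ, Nat.factorial_succ]
  push_cast
  field_simp

lemma pochQuot_ne_zero (hα : 0 < α.re) (p : ℕ) : pochQuot α p ≠ 0 :=
  div_ne_zero (poch_ne_zero hα p) (by exact_mod_cast p.factorial_ne_zero)

lemma kern_succ_right (hα : 0 < α.re) (hγ : 0 < γ.re) (m p : ℕ) :
    kern α γ m (p + 1) * (1 + α + γ + m + p) = kern α γ m p * (γ + p) := by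
  have h := re_one_add hα hγ
  have h1 := poch_ne_zero h (m + p)
  have h2 := add_natCast_ne_zero h (m + p)
  rw [kern, kern, ← add_assoc m p 1, poch_succ, poch_succ]
  push_cast at h2 ⊢
  rw [← add_assoc] at h2 ⊢
  field_simp

lemma kern_succ_left (hα : 0 < α.re) (hγ : 0 < γ.re) (m p : ℕ) :
    kern α γ (m + 1) p * (1 + α + γ + m + p) = kern α γ m p * (γ + m) := by
  rw [kern_symm, kern_symm α γ m p, ← kern_succ_right hα hγ]; ring

lemma norm_kern_le {K : ℝ} (hα : 0 < α.re) (hγ : 0 < γ.re)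
    (hK : ∀ p, ‖poch γ p‖ ≤ K * rpoch γ.re p) (m p : ℕ) :
    ‖kern α γ m p‖ ≤ ‖poch γ m‖ / ‖poch (1 + α + γ) m‖ * K *
      (rpoch γ.re p / rpoch (1 + α.re + γ.re) p) := by
  have h := re_one_add hα hγ
  have hc : 0 < 1 + α.re + γ.re := by positivity
  have hm : 0 < ‖poch (1 + α + γ) m‖ := norm_pos_iff.2 (poch_ne_zero h m)
  have h1 : rpoch (1 + α.re + γ.re) p ≤ ‖poch (1 + α + γ + m) p‖ := by
    refine le_trans ?_ (rpoch_le_norm ?_ p)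
    · exact rpoch_mono hc (by simp) p
    · simp only [Complex.add_re, Complex.natCast_re, Complex.one_re]; positivity
  have h2 := rpoch_pos hc p
  rw [kern, norm_div, norm_mul, poch_add, norm_mul]
  calc _ ≤ ‖poch γ m‖ * (K * rpoch γ.re p) /
        (‖poch (1 + α + γ) m‖ * rpoch (1 + α.re + γ.re) p) := by
        gcongr
        · exact mul_nonneg (norm_nonneg _) ((norm_nonneg _).trans (hK p))
        · exact hK p
    _ = _ := by field_simp

lemma exists_norm_gauss_term_le (hα : 0 < α.re) (hγ : 0 < γ.re) :
    ∃ M : ℝ, 0 < M ∧ ∀ p : ℕ, ‖pochQuot α p‖ * (rpoch γ.re p / rpoch (1 + α.re + γ.re) p)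
      ≤ M / (p + 1 : ℝ) ^ 2 := by
  obtain ⟨K, hK, hKb⟩ := exists_norm_poch_le hα
  obtain ⟨L, hL, hLb⟩ := exists_gauss_term_le hα hγ
  refine ⟨K * L, by positivity, fun p => ?_⟩
  have h1 := rpoch_pos hγ p
  have h2 := rpoch_pos (show 0 < 1 + α.re + γ.re by positivity) p
  have hf : (0 : ℝ) < p.factorial := by exact_mod_cast p.factorial_pos
  rw [pochQuot, norm_div, Complex.norm_natCast]
  calc _ ≤ K * rpoch α.re p / p.factorial * (rpoch γ.re p / rpoch (1 + α.re + γ.re) p) := by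
        gcongr; exact hKb p
    _ = K * (rpoch α.re p * rpoch γ.re p / (p.factorial * rpoch (1 + α.re + γ.re) p)) := by
        field_simp
    _ ≤ K * (L / (p + 1) ^ 2) := mul_le_mul_of_nonneg_left (hLb p) hK.le
    _ = _ := by ring

lemma exists_norm_gaussSer_term_le (hα : 0 < α.re) (hγ : 0 < γ.re) (m : ℕ) :
    ∃ M : ℝ, 0 ≤ M ∧ ∀ p : ℕ, ‖pochQuot α p * kern α γ m p‖ ≤ M / (p + 1 : ℝ) ^ 2 := by
  obtain ⟨K, hK, hKb⟩ := exists_norm_poch_le hγ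
  obtain ⟨M, hM, hMb⟩ := exists_norm_gauss_term_le hα hγ
  refine ⟨‖poch γ m‖ / ‖poch (1 + α + γ) m‖ * K * M, by positivity, fun p => ?_⟩
  rw [norm_mul]
  calc _ ≤ ‖pochQuot α p‖ * (‖poch γ m‖ / ‖poch (1 + α + γ) m‖ * K *
      (rpoch γ.re p / rpoch (1 + α.re + γ.re) p)) := by
        gcongr; exact norm_kern_le hα hγ hKb m p
    _ = ‖poch γ m‖ / ‖poch (1 + α + γ) m‖ * K *
      (‖pochQuot α p‖ * (rpoch γ.re p / rpoch (1 + α.re + γ.re) p)) := by ring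
    _ ≤ ‖poch γ m‖ / ‖poch (1 + α + γ) m‖ * K * (M / (p + 1) ^ 2) := by
        gcongr; exact hMb p
    _ = _ := by ring

lemma summable_div_sq (M : ℝ) : Summable fun p : ℕ => M / (p + 1 : ℝ) ^ 2 := by
  refine ((summable_inv_sq one_pos).mul_left M).congr fun p => ?_
  rw [add_comm (1 : ℝ)]; ring

lemma summable_gaussSer (hα : 0 < α.re) (hγ : 0 < γ.re) (m : ℕ) :
    Summable fun p => pochQuot α p * kern α γ m p := by
  obtain ⟨M, -, hM⟩ := exists_norm_gaussSer_term_le hα hγ m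
  exact Summable.of_norm_bounded (summable_div_sq M) hM

/-- Contiguity relation for the Gauss series: the difference of the two sides telescopes, with
`p ↦ p · (α)_p / p! · kern m p` as primitive. -/
lemma gaussSer_succ (hα : 0 < α.re) (hγ : 0 < γ.re) (m : ℕ) :
    gaussSer α γ (m + 1) * ((m + 1 + γ) * (m + 1 + α)) = gaussSer α γ m * ((m + 1) * (m + γ)) := by
  set R : ℕ → ℂ := fun p => p * (pochQuot α p * kern α γ m p) with hR
  have hstep : ∀ p : ℕ, pochQuot α p * kern α γ (m + 1) p * ((m + 1 + γ) * (m + 1 + α))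
      - pochQuot α p * kern α γ m p * ((m + 1) * (m + γ)) = (m + γ) * (R (p + 1) - R p) := by
    intro p
    have hne : (1 + α + γ + m + p) ≠ 0 := by
      have := add_natCast_ne_zero (re_one_add hα hγ) (m + p)
      push_cast at this
      rwa [← add_assoc] at this
    have e1 := kern_succ_left hα hγ m p
    have e2 := kern_succ_right hα hγ m p
    have e3 := pochQuot_succ (α := α) p
    simp only [hR]
    push_cast
    refine mul_right_cancel₀ hne ?_
    linear_combination (pochQuot α p * ((m + 1 + γ) * (m + 1 + α))) * e1
      - (m + γ) * (p + 1) * pochQuot α (p + 1) * e2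
      - (m + γ) * kern α γ m p * (γ + p) * e3
  have hRlim : Filter.Tendsto R Filter.atTop (nhds 0) := by
    obtain ⟨M, hM0, hM⟩ := exists_norm_gaussSer_term_le hα hγ m
    refine squeeze_zero_norm (a := fun p : ℕ => M * (1 / ((p : ℝ) + 1))) (fun p => ?_) ?_
    · simp only [hR]
      rw [norm_mul, Complex.norm_natCast]
      calc (p : ℝ) * _ ≤ (p + 1 : ℝ) * (M / (p + 1 : ℝ) ^ 2) := by
            gcongr
            · linarith
            · exact hM p
        _ = _ := by field_simp
    · simpa using (tendsto_one_div_add_atTop_nhds_zero_nat (𝕜 := ℝ)).const_mul M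
  have h1 := ((summable_gaussSer hα hγ (m + 1)).hasSum.mul_right ((m + 1 + γ) * (m + 1 + α))).sub
    ((summable_gaussSer hα hγ m).hasSum.mul_right ((m + 1 : ℂ) * (m + γ)))
  have h2 := h1.tendsto_sum_nat
  simp_rw [hstep, ← Finset.mul_sum, Finset.sum_range_sub] at h2
  have h3 : Filter.Tendsto (fun N => (m + γ) * (R N - R 0)) Filter.atTop (nhds 0) := by
    have := (hRlim.sub_const (R 0)).const_mul (m + γ)
    simpa [hR] using this
  exact sub_eq_zero.1 (tendsto_nhds_unique h2 h3)

/-- The constant `κ = αγ ∑_p (α)_p / p! · (γ)_p / (1+α+γ)_p` in the Gauss summation formula. -/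
noncomputable def gaussConst (α γ : ℂ) : ℂ := gaussSer α γ 0 * (γ * α)

/-- The Gauss summation formula for `gaussSer α γ m`, up to the constant independent of `m`. -/
lemma gaussSer_mul (hα : 0 < α.re) (hγ : 0 < γ.re) (m : ℕ) :
    gaussSer α γ m * (pochQuot α m * (m + γ) * (m + α)) = gaussConst α γ := by
  induction m with
  | zero => simp [gaussConst, pochQuot, poch_zero]
  | succ m ih =>
    have h1 : (m : ℂ) + 1 ≠ 0 := by exact_mod_cast m.succ_ne_zero
    rw [← ih]
    have e := gaussSer_succ hα hγ m
    have e3 := pochQuot_succ (α := α) m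
    push_cast
    refine mul_right_cancel₀ h1 ?_
    linear_combination (pochQuot α (m + 1) * (m + 1)) * e
      + gaussSer α γ m * ((m + 1) * (m + γ)) * e3

/-- If the constant vanished, so would every `gaussSer α γ m`; but after division by
`(γ)_m / (1+α+γ)_m` the zeroth term of that series is `1`, while the remaining ones sum to
`O(1/m)`. -/
lemma gaussConst_ne_zero (hα : 0 < α.re) (hγ : 0 < γ.re) : gaussConst α γ ≠ 0 := by
  intro h0
  have hc : 0 < 1 + α.re + γ.re := by positivity
  obtain ⟨K, hK, hKb⟩ := exists_norm_poch_le hγ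
  obtain ⟨M, hM, hMb⟩ := exists_norm_gauss_term_le hα hγ
  have hS := summable_div_sq M
  set S := ∑' p : ℕ, M / (p + 1 : ℝ) ^ 2
  set c := 1 + α.re + γ.re with hcdef
  have hbound : ∀ m : ℕ, (c + m) ≤ K * c * S := by
    intro m
    have hG : gaussSer α γ m = 0 := by
      have := gaussSer_mul hα hγ m
      rw [h0] at this
      refine (mul_eq_zero.1 this).resolve_right ?_
      exact mul_ne_zero (mul_ne_zero (pochQuot_ne_zero hα m) (natCast_add_ne_zero hγ m))
        (natCast_add_ne_zero hα m)
    have hsum := (summable_gaussSer hα hγ m)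
    have hz := hsum.tsum_eq_zero_add
    rw [show ∑' p, pochQuot α p * kern α γ m p = 0 from hG] at hz
    have hcm := re_one_add hα hγ
    set Q := poch γ m / poch (1 + α + γ) m with hQ
    have hQ0 : Q ≠ 0 := div_ne_zero (poch_ne_zero hγ m) (poch_ne_zero hcm m)
    have hT0 : pochQuot α 0 * kern α γ m 0 = Q := by
      simp [pochQuot, kern, poch_zero, hQ]
    rw [hT0] at hz
    have hcm' : 0 < c + m := by positivity
    have hterm : ∀ p : ℕ, ‖pochQuot α (p + 1) * kern α γ m (p + 1)‖ ≤
        ‖Q‖ * K * c / (c + m) * (M / ((p + 1 : ℕ) + 1 : ℝ) ^ 2) := by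
      intro p
      have hk : kern α γ m (p + 1) = Q * (poch γ (p + 1) / poch (1 + α + γ + m) (p + 1)) := by
        rw [kern, poch_add (1 + α + γ), hQ, mul_div_mul_comm]
      have hre : (1 + α + γ + m).re = c + m := by simp [hcdef]
      have hlow : (c + m) / c * rpoch c (p + 1) ≤ ‖poch (1 + α + γ + m) (p + 1)‖ := by
        refine le_trans ?_ (rpoch_le_norm (by rw [hre]; exact hcm') _)
        rw [hre, add_comm p 1, rpoch_add, rpoch_add (c + m)]
        have e1 : rpoch c 1 = c := by simp [rpoch]
        have e2 : rpoch (c + m) 1 = c + m := by simp [rpoch]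
        rw [e1, e2, ← mul_assoc, div_mul_cancel₀ _ hc.ne']
        gcongr
        exact rpoch_mono (by positivity) (by push_cast; linarith [(m.cast_nonneg : (0:ℝ) ≤ m)]) p
      have hrp := rpoch_pos hc (p + 1)
      rw [norm_mul, hk, norm_mul, norm_div (poch γ (p + 1))]
      calc _ ≤ ‖pochQuot α (p + 1)‖ * (‖Q‖ * (K * rpoch γ.re (p + 1) /
            ((c + m) / c * rpoch c (p + 1)))) := by
            gcongr
            · exact mul_nonneg hK.le (rpoch_pos hγ _).le
            · exact hKb _
        _ = ‖Q‖ * K * c / (c + m) *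
            (‖pochQuot α (p + 1)‖ * (rpoch γ.re (p + 1) / rpoch c (p + 1))) := by
            field_simp
        _ ≤ _ := mul_le_mul_of_nonneg_left (hMb (p + 1)) (by positivity)
    have hS1 : Summable fun p : ℕ => M / ((p + 1 : ℕ) + 1 : ℝ) ^ 2 :=
      (summable_nat_add_iff (f := fun p : ℕ => M / ((p : ℝ) + 1) ^ 2) 1).2 hS
    have hle := tsum_of_norm_bounded (hS1.hasSum.mul_left (‖Q‖ * K * c / (c + m))) hterm
    have hS2 : ∑' p : ℕ, M / ((p + 1 : ℕ) + 1 : ℝ) ^ 2 ≤ S := by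
      have := hS.tsum_eq_zero_add
      have h5 : (0 : ℝ) ≤ M / ((0 : ℕ) + 1 : ℝ) ^ 2 := by positivity
      change S = _ at this
      linarith
    have hQn : 0 < ‖Q‖ := norm_pos_iff.2 hQ0
    have hn : ‖Q‖ ≤ ‖Q‖ * K * c / (c + m) * S := by
      have : ∑' p : ℕ, pochQuot α (p + 1) * kern α γ m (p + 1) = -Q := by
        linear_combination -hz
      rw [this, norm_neg] at hle
      exact hle.trans (by gcongr)
    have : ‖Q‖ * (c + m) ≤ ‖Q‖ * (K * c * S) := by
      have := mul_le_mul_of_nonneg_right hn hcm'.le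
      refine this.trans_eq ?_
      field_simp
    exact le_of_mul_le_mul_left this hQn
  obtain ⟨m, hm⟩ := exists_nat_gt (K * c * S)
  linarith [hbound m]

/-- Moving a factor `1/(m+α)` across the connector creates a new summation variable: the series
telescopes, since `conn m (q+1) / (q+1+γ) = (conn m q - conn m (q+1)) / (m+α)`. -/
lemma hasSum_conn (hα : 0 < α.re) (hγ : 0 < γ.re) (m p : ℕ) :
    HasSum (fun j : ℕ => 1 / (((p + 1 + j : ℕ) : ℂ) + γ) * conn α γ m (p + 1 + j))
      (1 / (m + α) * conn α γ m p) := by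
  have hmα := natCast_add_ne_zero hα m
  obtain ⟨K, hK, hKb⟩ := exists_norm_poch_le hγ
  have e : ∀ q : ℕ, 1 / ((q : ℂ) + γ) * conn α γ m q
      = pochQuot α m * (m + γ) * kern α γ m q := by
    intro q
    have := natCast_add_ne_zero hγ q
    rw [conn]; field_simp
  have hsum : Summable fun q => kern α γ m q :=
    Summable.of_norm_bounded ((summable_rpoch_div hα hγ).mul_left _) (norm_kern_le hα hγ hKb m)
  have hsum2 : Summable fun j : ℕ => 1 / (((p + 1 + j : ℕ) : ℂ) + γ) * conn α γ m (p + 1 + j) := by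
    simp_rw [e]
    have := (summable_nat_add_iff (p + 1)).2 hsum
    refine (this.mul_left (pochQuot α m * (m + γ))).congr fun j => ?_
    rw [add_comm j]
  have hstep : ∀ q : ℕ, 1 / (((q + 1 : ℕ) : ℂ) + γ) * conn α γ m (q + 1)
      = 1 / (m + α) * (conn α γ m q - conn α γ m (q + 1)) := by
    intro q
    have hne : (1 + α + γ + m + q) ≠ 0 := by
      have := add_natCast_ne_zero (re_one_add hα hγ) (m + q)
      push_cast at this
      rwa [← add_assoc] at this
    rw [e]
    have e2 := kern_succ_right hα hγ m q
    rw [conn, conn]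
    push_cast
    field_simp
    linear_combination pochQuot α m * (m + γ) * e2
  have hpart : ∀ N : ℕ, ∑ j ∈ Finset.range N,
      1 / (((p + 1 + j : ℕ) : ℂ) + γ) * conn α γ m (p + 1 + j)
      = 1 / (m + α) * (conn α γ m p - conn α γ m (p + N)) := by
    intro N
    induction N with
    | zero => simp
    | succ N ih =>
      rw [Finset.sum_range_succ, ih, show p + 1 + N = (p + N) + 1 by ring, hstep]
      ring_nf
  have hlim : Filter.Tendsto (fun q => conn α γ m q) Filter.atTop (nhds 0) := by
    have hlim' := (tendsto_rpoch_div hα hγ).const_mul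
      (‖pochQuot α m * (m + γ)‖ * (‖poch γ m‖ / ‖poch (1 + α + γ) m‖ * K))
    rw [mul_zero] at hlim'
    have hlimk : Filter.Tendsto (fun q => pochQuot α m * (m + γ) * (γ.re + q) * kern α γ m q)
        Filter.atTop (nhds 0) := by
      refine squeeze_zero_norm (fun q => ?_) hlim'
      have hq : ‖(γ.re + q : ℂ)‖ = γ.re + q := by
        rw [← Complex.ofReal_natCast, ← Complex.ofReal_add, Complex.norm_real, Real.norm_eq_abs,
          abs_of_pos (by positivity)]
      rw [norm_mul, norm_mul _ (γ.re + q : ℂ), hq, rpoch_succ]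
      calc _ ≤ ‖pochQuot α m * (m + γ)‖ * (γ.re + q) * (‖poch γ m‖ / ‖poch (1 + α + γ) m‖ * K *
            (rpoch γ.re q / rpoch (1 + α.re + γ.re) q)) := by
              gcongr; exact norm_kern_le hα hγ hKb m q
        _ = _ := by ring
    have hk0 : Filter.Tendsto (fun q => kern α γ m q) Filter.atTop (nhds 0) :=
      hsum.tendsto_atTop_zero
    have := hlimk.add (hk0.const_mul (pochQuot α m * (m + γ) * (γ - γ.re)))
    simp only [mul_zero, add_zero] at this
    refine this.congr fun q => ?_
    rw [conn]; ring
  refine (hsum2.hasSum_iff_tendsto_nat).2 ?_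
  simp_rw [hpart]
  have h5 : Filter.Tendsto (fun N => conn α γ m (p + N)) Filter.atTop (nhds 0) := by
    refine (hlim.comp (Filter.tendsto_add_atTop_nat p)).congr fun N => ?_
    simp [add_comm]
  simpa using ((h5.const_sub (conn α γ m p)).const_mul (1 / ((m : ℂ) + α)))

/-- Summing out the smallest variable of a chain is a Gauss series in `p`. -/
lemma hasSum_conn_first (hα : 0 < α.re) (hγ : 0 < γ.re) (m : ℕ) :
    HasSum (fun p : ℕ => pochQuot α p * (1 / ((p : ℂ) + γ)) * conn α γ m p)
      (gaussConst α γ * (1 / (m + α))) := by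
  have h := (summable_gaussSer hα hγ m).hasSum.mul_left (pochQuot α m * (m + γ))
  have hmα := natCast_add_ne_zero hα m
  have e : gaussConst α γ * (1 / (m + α))
      = pochQuot α m * (m + γ) * ∑' p, pochQuot α p * kern α γ m p := by
    rw [← gaussSer_mul hα hγ m, gaussSer]; field_simp
  have e1 : ∀ p : ℕ, pochQuot α p * (1 / ((p : ℂ) + γ)) * conn α γ m p
      = pochQuot α m * (m + γ) * (pochQuot α p * kern α γ m p) := fun p => by
    have := natCast_add_ne_zero hγ p
    rw [conn]; field_simp
  simp only [e, e1]
  exact h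

/-- Summing out `m` on the other side of the connector is a Gauss series as well. -/
lemma hasSum_conn_left (hα : 0 < α.re) (hγ : 0 < γ.re) (p : ℕ) :
    HasSum (fun m : ℕ => conn α γ m p * (1 / ((m : ℂ) + γ)))
      (gaussConst α γ * (1 / (pochQuot α p * (p + α)))) := by
  have h := (summable_gaussSer hα hγ p).hasSum.mul_left (p + γ)
  have hmα := natCast_add_ne_zero hα p
  have hA := pochQuot_ne_zero hα p
  have e : gaussConst α γ * (1 / (pochQuot α p * (p + α)))
      = (p + γ) * ∑' m, pochQuot α m * kern α γ p m := by
    rw [← gaussSer_mul hα hγ p, gaussSer]; field_simp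
  have e1 : ∀ m : ℕ, conn α γ m p * (1 / ((m : ℂ) + γ))
      = (p + γ) * (pochQuot α m * kern α γ p m) := fun m => by
    have := natCast_add_ne_zero hγ m
    rw [conn, kern_symm]; field_simp
  simp only [e, e1]
  exact h

end

/-! ### Sums over strictly increasing chains -/

/-- Strictly increasing tuples of naturals, with the last entry split off through its gap to the
preceding one. -/
def snocStrictMono (N : ℕ) : {t : Fin (N + 1) → ℕ // StrictMono t} × ℕ ≃
    {t : Fin (N + 2) → ℕ // StrictMono t} where
  toFun x := ⟨Fin.snoc (α := fun _ => ℕ) x.1.1 (x.1.1 (Fin.last N) + 1 + x.2), by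
    rw [Fin.strictMono_iff_lt_succ]
    intro i
    refine Fin.lastCases ?_ (fun i => ?_) i
    · rw [Fin.snoc_castSucc, Fin.succ_last, Fin.snoc_last]; omega
    · rw [Fin.snoc_castSucc, Fin.succ_castSucc, Fin.snoc_castSucc]
      exact x.1.2 (Fin.castSucc_lt_succ)⟩
  invFun t := (⟨fun i => t.1 i.castSucc, fun _ _ h => t.2 (Fin.castSucc_lt_castSucc_iff.2 h)⟩,
    t.1 (Fin.last (N + 1)) - (t.1 (Fin.last N).castSucc + 1))
  left_inv x := by
    refine Prod.ext (Subtype.ext (funext fun i => ?_)) ?_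
    · simp [Fin.snoc_castSucc]
    · simp only [Fin.snoc_last, Fin.snoc_castSucc]; omega
  right_inv t := by
    refine Subtype.ext (funext fun i => ?_)
    have h : t.1 (Fin.last N).castSucc < t.1 (Fin.last (N + 1)) :=
      t.2 (Fin.castSucc_lt_last _)
    refine Fin.lastCases ?_ (fun i => ?_) i
    · simp only [Fin.snoc_last]; omega
    · simp only [Fin.snoc_castSucc]

lemma snocStrictMono_castSucc (N : ℕ) (x) (i : Fin (N + 1)) :
    (snocStrictMono N x).1 i.castSucc = x.1.1 i :=
  Fin.snoc_castSucc (α := fun _ => ℕ) _ _ i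

lemma snocStrictMono_zero (N : ℕ) (x) : (snocStrictMono N x).1 0 = x.1.1 0 :=
  snocStrictMono_castSucc N x 0

lemma snocStrictMono_last (N : ℕ) (x) :
    (snocStrictMono N x).1 (Fin.last (N + 1)) = x.1.1 (Fin.last N) + 1 + x.2 :=
  Fin.snoc_last (α := fun _ => ℕ) _ _

/-- Strictly increasing `1`-tuples are natural numbers. -/
def strictMonoOne : ℕ ≃ {t : Fin (0 + 1) → ℕ // StrictMono t} where
  toFun p := ⟨fun _ => p, fun i j h => absurd h (by simp [Subsingleton.elim (α := Fin 1) i j])⟩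
  invFun t := t.1 0
  left_inv _ := rfl
  right_inv t := Subtype.ext (funext fun i => by rw [Subsingleton.elim (α := Fin 1) i 0])

section chains

variable {𝕜 : Type*} [RCLike 𝕜]

/-- The summand `a(t₁) u(t₁) ⋯ u(t_{N+1}) c(t_{N+1})` attached to a chain `t₁ < ⋯ < t_{N+1}`. -/
def chainTerm (a u c : ℕ → 𝕜) {N : ℕ} (t : {t : Fin (N + 1) → ℕ // StrictMono t}) : 𝕜 :=
  a (t.1 0) * (∏ i, u (t.1 i)) * c (t.1 (Fin.last N))

lemma chainTerm_snoc (a u c : ℕ → 𝕜) {N : ℕ} (x : {t : Fin (N + 1) → ℕ // StrictMono t} × ℕ) :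
    chainTerm a u c (snocStrictMono N x) = chainTerm a u (fun _ => 1) x.1 *
      (u (x.1.1 (Fin.last N) + 1 + x.2) * c (x.1.1 (Fin.last N) + 1 + x.2)) := by
  rw [chainTerm, chainTerm, Fin.prod_univ_castSucc, snocStrictMono_zero, snocStrictMono_last]
  simp only [snocStrictMono_castSucc]
  ring

/-- Summing out the largest variable by `h1` replaces it by a factor `β` and shortens the chain by
one; a chain of length one is summed by `h0`. -/
lemma hasSum_chain {a u c : ℕ → 𝕜} {κ β : 𝕜}
    (h0 : HasSum (fun p => a p * u p * c p) (κ * β))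
    (h1 : ∀ p, HasSum (fun j => u (p + 1 + j) * c (p + 1 + j)) (β * c p)) (N : ℕ)
    (hs : ∀ N, Summable (chainTerm a u c (N := N))) :
    HasSum (chainTerm a u c (N := N)) (κ * β ^ (N + 1)) := by
  induction N with
  | zero =>
    rw [← strictMonoOne.hasSum_iff, show κ * β ^ (0 + 1) = κ * β by simp]
    convert h0 using 2 with p
    simp [chainTerm, strictMonoOne]
  | succ N ih =>
    have hs1 := (snocStrictMono N).summable_iff.2 (hs (N + 1))
    have hf : ∀ t : {t : Fin (N + 1) → ℕ // StrictMono t}, HasSum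
        (fun j => (chainTerm a u c ∘ snocStrictMono N) (t, j)) (chainTerm a u c t * β) := by
      intro t
      simp only [Function.comp, chainTerm_snoc]
      have e : chainTerm a u c t * β
          = chainTerm a u (fun _ => 1) t * (β * c (t.1 (Fin.last N))) := by
        simp only [chainTerm]; ring
      rw [e]
      exact (h1 (t.1 (Fin.last N))).mul_left (chainTerm a u (fun _ => 1) t)
    have h2 := hs1.hasSum.prod_fiberwise hf
    have h3 := h2.unique (ih.mul_right β)
    rw [← (snocStrictMono N).hasSum_iff, pow_succ, ← mul_assoc, ← h3]
    exact hs1.hasSum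

end chains

/-- For nonnegative data the summability required in `hasSum_chain` is automatic. -/
lemma summable_chain {a u c : ℕ → ℝ} (ha : ∀ p, 0 ≤ a p) (hu : ∀ p, 0 ≤ u p) (hc : ∀ p, 0 ≤ c p)
    {β : ℝ} (h0 : Summable (fun p => a p * u p * c p))
    (h1 : ∀ p, HasSum (fun j => u (p + 1 + j) * c (p + 1 + j)) (β * c p)) (N : ℕ) :
    Summable (chainTerm a u c (N := N)) := by
  induction N with
  | zero =>
    rw [← strictMonoOne.summable_iff]
    refine h0.congr fun p => ?_
    simp [chainTerm, strictMonoOne]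
  | succ N ih =>
    rw [← (snocStrictMono N).summable_iff]
    have hf : ∀ t : {t : Fin (N + 1) → ℕ // StrictMono t}, HasSum
        (fun j => (chainTerm a u c ∘ snocStrictMono N) (t, j)) (chainTerm a u c t * β) := by
      intro t
      simp only [Function.comp, chainTerm_snoc]
      have e : chainTerm a u c t * β
          = chainTerm a u (fun _ => 1) t * (β * c (t.1 (Fin.last N))) := by
        simp only [chainTerm]; ring
      rw [e]
      exact (h1 (t.1 (Fin.last N))).mul_left (chainTerm a u (fun _ => 1) t)
    rw [summable_prod_of_nonneg]
    · refine ⟨fun t => (hf t).summable, ?_⟩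
      simp_rw [fun t => (hf t).tsum_eq]
      exact ih.mul_right β
    · intro x
      exact mul_nonneg (mul_nonneg (ha _) (Finset.prod_nonneg fun i _ => hu _)) (hc _)

/-! ### The chain sum with parameters `α` and `γ` -/

/-- The coefficient `(α)_p / p!` for real `α`. -/
noncomputable def rpochQuot (α : ℝ) (p : ℕ) : ℝ := rpoch α p / (p.factorial : ℝ)

/-- The connector for real parameters. -/
noncomputable def rconn (α γ : ℝ) (m p : ℕ) : ℝ :=
  rpochQuot α m * (m + γ) * (p + γ) * (rpoch γ m * rpoch γ p / rpoch (1 + α + γ) (m + p))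

lemma pochQuot_ofReal (α : ℝ) (p : ℕ) : pochQuot (α : ℂ) p = (rpochQuot α p : ℝ) := by
  simp [pochQuot, rpochQuot, poch_ofReal]

lemma conn_ofReal (α γ : ℝ) (m p : ℕ) : conn (α : ℂ) γ m p = (rconn α γ m p : ℝ) := by
  have : (1 : ℂ) + α + γ = ((1 + α + γ : ℝ) : ℂ) := by push_cast; rfl
  rw [conn, kern, this, pochQuot_ofReal, poch_ofReal, poch_ofReal, poch_ofReal, rconn]
  push_cast
  rfl

lemma rpochQuot_nonneg {α : ℝ} (hα : 0 < α) (p : ℕ) : 0 ≤ rpochQuot α p :=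
  div_nonneg (rpoch_pos hα p).le (Nat.cast_nonneg _)

lemma rconn_nonneg {α γ : ℝ} (hα : 0 < α) (hγ : 0 < γ) (m p : ℕ) : 0 ≤ rconn α γ m p := by
  have := rpochQuot_nonneg hα m
  have := (rpoch_pos hγ m).le
  have := (rpoch_pos hγ p).le
  have := (rpoch_pos (show 0 < 1 + α + γ by positivity) (m + p)).le
  unfold rconn
  positivity

/-- For real parameters all terms are nonnegative, so the double sum over `m` and over chains
converges because the iterated one does. -/
lemma summable_real_joint {α γ : ℝ} (hα : 0 < α) (hγ : 0 < γ) (N : ℕ) :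
    Summable fun x : ℕ × {t : Fin (N + 1) → ℕ // StrictMono t} =>
      chainTerm (rpochQuot α) (fun p => 1 / ((p : ℝ) + γ)) (rconn α γ x.1) x.2
        * (1 / ((x.1 : ℝ) + γ)) := by
  have hα' : 0 < (α : ℂ).re := hα
  have hγ' : 0 < (γ : ℂ).re := hγ
  have hu : ∀ p : ℕ, 0 ≤ 1 / ((p : ℝ) + γ) := fun p => by positivity
  have h0 : ∀ m : ℕ, HasSum (fun p => rpochQuot α p * (1 / ((p : ℝ) + γ)) * rconn α γ m p)
      ((gaussConst α γ).re * (1 / ((m : ℝ) + α))) := by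
    intro m
    have := Complex.hasSum_re (hasSum_conn_first hα' hγ' m)
    have e : (gaussConst (α : ℂ) γ * (1 / ((m : ℂ) + α))).re
        = (gaussConst (α : ℂ) γ).re * (1 / ((m : ℝ) + α)) := by
      rw [show (1 / ((m : ℂ) + α)) = ((1 / ((m : ℝ) + α) : ℝ) : ℂ) by push_cast; rfl,
        Complex.re_mul_ofReal]
    rw [e] at this
    convert this using 2 with p
    rw [pochQuot_ofReal, conn_ofReal]
    norm_cast
  have h1 : ∀ m p : ℕ, HasSum (fun j : ℕ => 1 / (((p + 1 + j : ℕ) : ℝ) + γ)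
      * rconn α γ m (p + 1 + j)) (1 / ((m : ℝ) + α) * rconn α γ m p) := by
    intro m p
    have := hasSum_conn hα' hγ' m p
    simp only [conn_ofReal] at this
    exact_mod_cast this
  have hs : ∀ m N, Summable (chainTerm (rpochQuot α) (fun p => 1 / ((p : ℝ) + γ)) (rconn α γ m)
      (N := N)) := fun m N =>
    summable_chain (rpochQuot_nonneg hα) hu (rconn_nonneg hα hγ m) (h0 m).summable (h1 m) N
  have hval := fun m => (hasSum_chain (h0 m) (h1 m) N (hs m)).mul_right (1 / ((m : ℝ) + γ))
  rw [summable_prod_of_nonneg]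
  · refine ⟨fun m => (hval m).summable, ?_⟩
    simp_rw [fun m => (hval m).tsum_eq, mul_assoc]
    refine Summable.mul_left _ ?_
    set δ := min α γ
    have hδ : 0 < δ := lt_min hα hγ
    refine Summable.of_nonneg_of_le (fun m => by positivity) (fun m => ?_)
      ((summable_inv_sq hδ).mul_left ((1 / α) ^ N))
    rw [pow_succ, mul_assoc]
    gcongr
    · linarith [(m.cast_nonneg : (0 : ℝ) ≤ m)]
    · rw [one_div_mul_one_div, sq]
      have h1 : δ + m ≤ m + α := by linarith [min_le_left α γ]
      have h2 : δ + m ≤ m + γ := by linarith [min_le_right α γ]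
      gcongr
  · intro x
    exact mul_nonneg (mul_nonneg (mul_nonneg (rpochQuot_nonneg hα _)
      (Finset.prod_nonneg fun i _ => hu _)) (rconn_nonneg hα hγ _ _)) (hu _)

section

variable {α γ : ℂ}

lemma norm_one_div_natCast_add_le (hγ : 0 < γ.re) (p : ℕ) :
    ‖1 / ((p : ℂ) + γ)‖ ≤ 1 / ((p : ℝ) + γ.re) := by
  rw [norm_div, norm_one]
  have := re_add_le_norm γ p
  rw [add_comm (p : ℂ), add_comm (p : ℝ)]
  gcongr

lemma exists_norm_pochQuot_le (hα : 0 < α.re) :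
    ∃ K : ℝ, 0 < K ∧ ∀ p, ‖pochQuot α p‖ ≤ K * rpochQuot α.re p := by
  obtain ⟨K, hK, hKb⟩ := exists_norm_poch_le hα
  refine ⟨K, hK, fun p => ?_⟩
  rw [pochQuot, rpochQuot, norm_div, Complex.norm_natCast, ← mul_div_assoc]
  gcongr
  exact hKb p

lemma exists_norm_conn_le (hα : 0 < α.re) (hγ : 0 < γ.re) :
    ∃ K : ℝ, 0 < K ∧ ∀ m p, ‖conn α γ m p‖ ≤ K * rconn α.re γ.re m p := by
  obtain ⟨K, hK, hKb⟩ := exists_norm_pochQuot_le hα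
  obtain ⟨L, hL, hLb⟩ := exists_norm_poch_le hγ
  have hc : 0 < 1 + α.re + γ.re := by positivity
  refine ⟨K * L * L, by positivity, fun m p => ?_⟩
  have e1 : conn α γ m p = pochQuot α m * (poch γ (m + 1) * poch γ (p + 1))
      / poch (1 + α + γ) (m + p) := by
    rw [conn, kern, poch_succ, poch_succ]; ring
  have e2 : rconn α.re γ.re m p = rpochQuot α.re m * (rpoch γ.re (m + 1) * rpoch γ.re (p + 1))
      / rpoch (1 + α.re + γ.re) (m + p) := by
    rw [rconn, rpoch_succ, rpoch_succ]; ring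
  have h1 := rpoch_le_norm (re_one_add hα hγ) (m + p)
  simp only [Complex.add_re, Complex.one_re] at h1
  have h2 := rpoch_pos hc (m + p)
  have h3 := rpochQuot_nonneg hα m
  have h4 := fun m => (rpoch_pos hγ m).le
  rw [e1, e2, norm_div, norm_mul, norm_mul]
  calc _ ≤ K * rpochQuot α.re m * (L * rpoch γ.re (m + 1) * (L * rpoch γ.re (p + 1)))
        / rpoch (1 + α.re + γ.re) (m + p) := by
        have := h4 (m + 1)
        have := h4 (p + 1)
        gcongr
        · exact hKb m
        · exact hLb _
        · exact hLb _
    _ = _ := by ring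

lemma norm_chainTerm_le {a u c : ℕ → ℂ} {a₁ u₁ c₁ : ℕ → ℝ} {K L : ℝ}
    (ha : ∀ p, ‖a p‖ ≤ K * a₁ p) (hu : ∀ p, ‖u p‖ ≤ u₁ p) (hc : ∀ p, ‖c p‖ ≤ L * c₁ p) {N : ℕ}
    (t : {t : Fin (N + 1) → ℕ // StrictMono t}) :
    ‖chainTerm a u c t‖ ≤ K * L * chainTerm a₁ u₁ c₁ t := by
  rw [chainTerm, chainTerm, norm_mul, norm_mul, norm_prod]
  calc _ ≤ (K * a₁ (t.1 0)) * (∏ i, u₁ (t.1 i)) * (L * c₁ (t.1 (Fin.last N))) := by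
        have h1 : ∏ i, ‖u (t.1 i)‖ ≤ ∏ i, u₁ (t.1 i) :=
          Finset.prod_le_prod (fun i _ => norm_nonneg _) (fun i _ => hu _)
        have h2 : 0 ≤ K * a₁ (t.1 0) := (norm_nonneg _).trans (ha _)
        have h3 : 0 ≤ ∏ i, u₁ (t.1 i) := Finset.prod_nonneg fun i _ => (norm_nonneg _).trans (hu _)
        gcongr
        · exact ha _
        · exact hc _
    _ = _ := by ring

lemma hasSum_of_eq {ι : Type*} {f g : ι → ℂ} {a b : ℂ} (h : HasSum f a) (hf : ∀ i, g i = f i)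
    (hb : b = a) : HasSum g b := by
  rw [hb, funext hf]; exact h

/-- The generating-function form of the theorem: with `γ = α - x` it collects, for a fixed depth
`N + 1`, the claims for all weights. -/
lemma hasSum_chain_main (hα : 0 < α.re) (hγ : 0 < γ.re) (N : ℕ) :
    HasSum (chainTerm (pochQuot α) (fun p => 1 / ((p : ℂ) + γ))
      (fun p => 1 / (pochQuot α p * (p + α))) (N := N))
      (∑' m : ℕ, (1 / ((m : ℂ) + α)) ^ (N + 1) * (1 / ((m : ℂ) + γ))) := by
  obtain ⟨K, hK, hKb⟩ := exists_norm_pochQuot_le hα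
  obtain ⟨L, hL, hLb⟩ := exists_norm_conn_le hα hγ
  have hκ := gaussConst_ne_zero hα hγ
  have hJ : Summable fun x : ℕ × {t : Fin (N + 1) → ℕ // StrictMono t} =>
      chainTerm (pochQuot α) (fun p => 1 / ((p : ℂ) + γ)) (conn α γ x.1) x.2
        * (1 / ((x.1 : ℂ) + γ)) := by
    refine Summable.of_norm_bounded ((summable_real_joint hα hγ N).mul_left (K * L)) fun x => ?_
    have h1 := norm_chainTerm_le hKb (norm_one_div_natCast_add_le hγ) (hLb x.1) x.2
    rw [norm_mul, ← mul_assoc]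
    exact mul_le_mul h1 (norm_one_div_natCast_add_le hγ _) (norm_nonneg _)
      ((norm_nonneg _).trans h1)
  have hs : ∀ m N', Summable (chainTerm (pochQuot α) (fun p => 1 / ((p : ℂ) + γ)) (conn α γ m)
      (N := N')) := by
    intro m N'
    have h1 := ((summable_real_joint hα hγ N').prod_factor m).mul_right ((m : ℝ) + γ.re)
    refine Summable.of_norm_bounded (h1.mul_left (K * L)) fun t => ?_
    refine (norm_chainTerm_le hKb (norm_one_div_natCast_add_le hγ) (hLb m) t).trans_eq ?_
    have : (m : ℝ) + γ.re ≠ 0 := by positivity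
    field_simp
  have hm := hJ.hasSum.prod_fiberwise fun m =>
    (hasSum_chain (hasSum_conn_first hα hγ m) (hasSum_conn hα hγ m) N (hs m)).mul_right
      (1 / ((m : ℂ) + γ))
  have hfib : ∀ t : {t : Fin (N + 1) → ℕ // StrictMono t}, HasSum (fun m : ℕ =>
      chainTerm (pochQuot α) (fun p => 1 / ((p : ℂ) + γ)) (conn α γ m) t * (1 / ((m : ℂ) + γ)))
      (gaussConst α γ * chainTerm (pochQuot α) (fun p => 1 / ((p : ℂ) + γ))
        (fun p => 1 / (pochQuot α p * (p + α))) t) := by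
    intro t
    have h := (hasSum_conn_left hα hγ (t.1 (Fin.last N))).mul_left
      (chainTerm (pochQuot α) (fun p => 1 / ((p : ℂ) + γ)) (fun _ => 1) t)
    simp only [chainTerm] at h ⊢
    exact hasSum_of_eq h (fun m => by ring) (by ring)
  have ht := ((Equiv.prodComm _ _).hasSum_iff.2 hJ.hasSum).prod_fiberwise hfib
  simp_rw [mul_assoc (gaussConst α γ)] at hm
  have hval := hm.tsum_eq
  rw [tsum_mul_left] at hval
  rw [← hval] at ht
  have h6 := ht.mul_left (gaussConst α γ)⁻¹
  rw [inv_mul_cancel_left₀ hκ] at h6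
  simp_rw [inv_mul_cancel_left₀ hκ] at h6
  exact h6

end

/-! ### Comparison of power series coefficients -/

lemma hasSum_pi_prod {n : ℕ} (f : Fin n → ℕ → ℂ) (hf : ∀ i, Summable fun e => ‖f i e‖) :
    (Summable fun e : Fin n → ℕ => ‖∏ i, f i (e i)‖) ∧
      HasSum (fun e : Fin n → ℕ => ∏ i, f i (e i)) (∏ i, ∑' e, f i e) := by
  induction n with
  | zero =>
    refine ⟨Summable.of_finite, ?_⟩
    simp
  | succ n ih =>
    obtain ⟨h1, h2⟩ := ih (fun i => f i.succ) (fun i => hf i.succ)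
    have e : ∀ x : ℕ × (Fin n → ℕ), ∏ i, f i (Fin.consEquiv (fun _ => ℕ) x i)
        = f 0 x.1 * ∏ i, f (Fin.succ i) (x.2 i) := by
      intro x
      rw [Fin.prod_univ_succ]
      simp [Fin.consEquiv]
    have hs := (hf 0).mul_norm h1
    have hs' : Summable fun e : Fin (n + 1) → ℕ => ‖∏ i, f i (e i)‖ := by
      rw [← (Fin.consEquiv (fun _ => ℕ)).summable_iff]
      exact hs.congr fun x => by rw [Function.comp, e]
    refine ⟨hs', ?_⟩
    rw [← (Fin.consEquiv (fun _ => ℕ)).hasSum_iff, Fin.prod_univ_succ, ← h2.tsum_eq,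
      tsum_mul_tsum_of_summable_norm (hf 0) h1]
    exact hasSum_of_eq hs.of_norm.hasSum (fun x => by rw [Function.comp, e]) rfl

lemma coeff_unique {c d : ℕ → ℂ} {S : ℂ → ℂ} {r : ℝ} (hr : 0 < r)
    (hc : ∀ x : ℂ, ‖x‖ < r → HasSum (fun j => x ^ j * c j) (S x))
    (hd : ∀ x : ℂ, ‖x‖ < r → HasSum (fun j => x ^ j * d j) (S x)) : c = d := by
  have key : ∀ c : ℕ → ℂ, (∀ x : ℂ, ‖x‖ < r → HasSum (fun j => x ^ j * c j) (S x)) →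
      HasFPowerSeriesAt S (FormalMultilinearSeries.ofScalars ℂ c) 0 := by
    intro c hc
    rw [hasFPowerSeriesAt_iff]
    filter_upwards [Metric.ball_mem_nhds (0 : ℂ) hr] with x hx
    rw [zero_add]
    simpa [FormalMultilinearSeries.coeff_ofScalars] using hc x (by simpa using hx)
  have h := (key c hc).eq_formalMultilinearSeries (key d hd)
  funext j
  simpa [FormalMultilinearSeries.coeff_ofScalars] using
    congrArg (fun p => FormalMultilinearSeries.coeff p j) h

section

variable {α : ℂ}

/-- The chain summand with all exponents minimal, `(k₁, …, k_{N+1}) = (1, …, 1, 2)`. -/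
noncomputable def baseTerm (α : ℂ) {N : ℕ} (t : {t : Fin (N + 1) → ℕ // StrictMono t}) : ℂ :=
  chainTerm (pochQuot α) (fun p => 1 / ((p : ℂ) + α)) (fun p => 1 / (pochQuot α p * (p + α))) t

/-- The chain sum with exponents `(e₁ + 1, …, e_N + 1, e_{N+1} + 2)`. -/
noncomputable def chainSum (α : ℂ) {N : ℕ} (e : Fin (N + 1) → ℕ) : ℂ :=
  ∑' t : {t : Fin (N + 1) → ℕ // StrictMono t},
    baseTerm α t * ∏ i, (1 / ((t.1 i : ℂ) + α)) ^ e i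

lemma norm_div_le_half (hα : 0 < α.re) {x : ℂ} (hx : ‖x‖ < α.re / 2) (m : ℕ) :
    ‖x / ((m : ℂ) + α)‖ ≤ 1 / 2 := by
  have h1 := re_add_le_norm α m
  have h2 : (0 : ℝ) ≤ m := m.cast_nonneg
  rw [norm_div, add_comm, div_le_iff₀ (by linarith)]
  linarith

lemma summable_norm_geom {y : ℂ} (hy : ‖y‖ ≤ 1 / 2) : Summable fun j : ℕ => ‖y ^ j‖ := by
  simp_rw [norm_pow]
  exact summable_geometric_of_lt_one (norm_nonneg _) (by linarith)

lemma one_div_mul_tsum_geom (hα : 0 < α.re) {x : ℂ} (hx : ‖x‖ < α.re / 2) (m : ℕ) :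
    1 / ((m : ℂ) + α) * ∑' j : ℕ, (x / ((m : ℂ) + α)) ^ j = 1 / ((m : ℂ) + (α - x)) := by
  have h := norm_div_le_half hα hx m
  rw [tsum_geometric_of_norm_lt_one (by linarith)]
  have hne := natCast_add_ne_zero hα m
  rw [one_div, one_div, ← mul_inv, mul_sub, mul_one, mul_div_cancel₀ _ hne, add_sub_assoc]

lemma re_sub_pos (hα : 0 < α.re) {x : ℂ} (hx : ‖x‖ < α.re / 2) : 0 < (α - x).re := by
  have := Complex.re_le_norm x
  rw [Complex.sub_re]; linarith

/-- Expansion of the generating function in `x` through the chain sums. -/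
lemma hasSum_chainSum (hα : 0 < α.re) {x : ℂ} (hx : ‖x‖ < α.re / 2) (N : ℕ) :
    HasSum (fun e : Fin (N + 1) → ℕ => x ^ (∑ i, e i) * chainSum α e)
      (∑' m : ℕ, (1 / ((m : ℂ) + α)) ^ (N + 1) * (1 / ((m : ℂ) + (α - x)))) := by
  have hW : Summable (baseTerm α (N := N)) := (hasSum_chain_main hα hα N).summable
  have hhalf := (hasSum_pi_prod (n := N + 1) (fun _ e => (1 / 2 : ℂ) ^ e)
    (fun _ => summable_norm_geom (by norm_num))).1
  have hJ : Summable fun y : {t : Fin (N + 1) → ℕ // StrictMono t} × (Fin (N + 1) → ℕ) =>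
      baseTerm α y.1 * ∏ i, (x / ((y.1.1 i : ℂ) + α)) ^ y.2 i := by
    refine Summable.of_norm_bounded (hW.norm.mul_of_nonneg hhalf (fun _ => norm_nonneg _)
      (fun _ => norm_nonneg _)) fun y => ?_
    rw [norm_mul]
    refine mul_le_mul_of_nonneg_left ?_ (norm_nonneg _)
    rw [norm_prod, norm_prod]
    refine Finset.prod_le_prod (fun i _ => norm_nonneg _) fun i _ => ?_
    rw [norm_pow, norm_pow]
    have := norm_div_le_half hα hx (y.1.1 i)
    rw [show ‖(1 / 2 : ℂ)‖ = 1 / 2 by norm_num]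
    gcongr
  have ht := hJ.hasSum.prod_fiberwise fun t => ((hasSum_pi_prod
    (fun i e => (x / ((t.1 i : ℂ) + α)) ^ e)
    (fun i => summable_norm_geom (norm_div_le_half hα hx (t.1 i)))).2.mul_left (baseTerm α t))
  have hmain := hasSum_chain_main hα (re_sub_pos hα hx) N
  have hS := (hasSum_of_eq hmain (fun t => ?_) rfl).unique ht
  · rw [hS]
    have h2 := ((Equiv.prodComm _ _).hasSum_iff.2 hJ.hasSum).prod_fiberwise
      fun e => (((Equiv.prodComm _ _).summable_iff.2 hJ).prod_factor e).hasSum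
    refine hasSum_of_eq h2 (fun e => ?_) rfl
    rw [chainSum, ← tsum_mul_left]
    refine tsum_congr fun t => ?_
    simp only [Function.comp, Equiv.prodComm_apply, Prod.swap]
    rw [← Finset.prod_pow_eq_pow_sum, mul_left_comm, ← Finset.prod_mul_distrib]
    congr 1
    refine Finset.prod_congr rfl fun i _ => ?_
    rw [← mul_pow, mul_one_div]
  · simp only [baseTerm, chainTerm]
    simp_rw [← one_div_mul_tsum_geom hα hx]
    rw [Finset.prod_mul_distrib]
    ring

lemma summable_one_div_pow (hα : 0 < α.re) (N : ℕ) :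
    Summable fun m : ℕ => (1 / ((m : ℂ) + α)) ^ (N + 2) := by
  refine Summable.of_norm_bounded ((summable_inv_sq hα).mul_left ((1 / α.re) ^ N)) fun m => ?_
  have h := norm_one_div_natCast_add_le hα m
  rw [norm_pow, pow_add]
  have h2 : (0 : ℝ) ≤ m := m.cast_nonneg
  gcongr
  · exact h.trans (by gcongr; linarith)
  · rw [← one_div_pow]
    rw [add_comm α.re]
    gcongr

/-- Expansion of the generating function in `x` through Hurwitz zeta values. -/
lemma hasSum_hurwitz (hα : 0 < α.re) {x : ℂ} (hx : ‖x‖ < α.re / 2) (N : ℕ) :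
    HasSum (fun j : ℕ => x ^ j * ∑' m : ℕ, (1 / ((m : ℂ) + α)) ^ (N + 2 + j))
      (∑' m : ℕ, (1 / ((m : ℂ) + α)) ^ (N + 1) * (1 / ((m : ℂ) + (α - x)))) := by
  have hJ : Summable fun y : ℕ × ℕ =>
      (1 / ((y.1 : ℂ) + α)) ^ (N + 2) * (x / ((y.1 : ℂ) + α)) ^ y.2 := by
    refine Summable.of_norm_bounded ((summable_one_div_pow hα N).norm.mul_of_nonneg
      (summable_norm_geom (y := 1 / 2) (by norm_num)) (fun _ => norm_nonneg _)
      (fun _ => norm_nonneg _)) fun y => ?_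
    rw [norm_mul]
    refine mul_le_mul_of_nonneg_left ?_ (norm_nonneg _)
    rw [norm_pow, norm_pow]
    have := norm_div_le_half hα hx y.1
    rw [show ‖(1 / 2 : ℂ)‖ = 1 / 2 by norm_num]
    gcongr
  have hm := hJ.hasSum.prod_fiberwise fun m => ((summable_norm_geom
    (norm_div_le_half hα hx m)).of_norm.hasSum.mul_left ((1 / ((m : ℂ) + α)) ^ (N + 2)))
  have h2 := ((Equiv.prodComm _ _).hasSum_iff.2 hJ.hasSum).prod_fiberwise
    fun e => (((Equiv.prodComm _ _).summable_iff.2 hJ).prod_factor e).hasSum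
  rw [← hm.tsum_eq] at h2
  refine hasSum_of_eq h2 (fun j => ?_) (tsum_congr fun m => ?_)
  · rw [← tsum_mul_left]
    refine tsum_congr fun m => ?_
    simp only [Function.comp, Equiv.prodComm_apply, Prod.swap]
    rw [div_eq_mul_one_div x, mul_pow, pow_add]
    ring
  · rw [← one_div_mul_tsum_geom hα hx, pow_succ _ (N + 1)]
    ring

lemma hurwitz_eq_tsum_chainSum (hα : 0 < α.re) (N j : ℕ) :
    ∑' m : ℕ, (1 / ((m : ℂ) + α)) ^ (N + 2 + j)
      = ∑' e : {e : Fin (N + 1) → ℕ // ∑ i, e i = j}, chainSum α e.1 := by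
  have hr : 0 < α.re / 2 := by positivity
  refine congrFun (coeff_unique hr (fun x hx => hasSum_hurwitz hα hx N)
    (d := fun j => ∑' e : {e : Fin (N + 1) → ℕ // ∑ i, e i = j}, chainSum α e.1)
    (fun x hx => ?_)) j
  have h := (Equiv.sigmaFiberEquiv (fun e : Fin (N + 1) → ℕ => ∑ i, e i)).hasSum_iff.2
    (hasSum_chainSum hα hx N)
  have h2 := h.sigma fun j => (h.summable.sigma_factor j).hasSum
  refine hasSum_of_eq h2 (fun j => ?_) rfl
  rw [← tsum_mul_left]
  refine tsum_congr fun e => ?_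
  simp only [Function.comp, Equiv.sigmaFiberEquiv_apply]
  rw [e.2]

end

/-- Adding the minimal exponents `(1, …, 1, 2)` identifies the arbitrary exponents of sum `j` with
the admissible exponents of weight `N + 2 + j`. -/
def exponentEquiv (N j : ℕ) : {e : Fin (N + 1) → ℕ // ∑ i, e i = j} ≃
    {κ : Fin (N + 1) → ℕ // (∀ i, 1 ≤ κ i) ∧ 2 ≤ κ (Fin.last N) ∧ ∑ i, κ i = N + 2 + j} where
  toFun e := ⟨fun i => e.1 i + 1 + if i = Fin.last N then 1 else 0,
    fun i => by dsimp only; omega, by simp, by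
    simp only [Finset.sum_add_distrib, e.2, Finset.sum_ite_eq', Finset.mem_univ, if_true]
    simp; ring⟩
  invFun κ := ⟨fun i => κ.1 i - (1 + if i = Fin.last N then 1 else 0), by
    have h : ∀ i, κ.1 i - (1 + if i = Fin.last N then 1 else 0)
        + (1 + if i = Fin.last N then 1 else 0) = κ.1 i := fun i => by
      have h1 := κ.2.1 i
      have h2 := κ.2.2.1
      split_ifs with hi
      · subst hi; omega
      · omega
    have h3 := κ.2.2.2
    rw [← Finset.sum_congr rfl fun i _ => h i, Finset.sum_add_distrib, Finset.sum_add_distrib] at h3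
    simp only [Finset.sum_ite_eq', Finset.mem_univ, if_true] at h3
    simp at h3
    dsimp only
    omega⟩
  left_inv e := Subtype.ext (funext fun i => by simp only; omega)
  right_inv κ := Subtype.ext (funext fun i => by
    have h1 := κ.2.1 i
    have h2 := κ.2.2.1
    simp only
    split_ifs with hi
    · subst hi; omega
    · omega)

/-- Corollary 2: for integers `0 < n < k` and `α ∈ ℂ` with `Re α > 0`, the Hurwitz zeta
value `ζ(k;α) = ∑_{m≥0} 1/(m+α)^k` equals the sum over all tuples `(k₁,…,kₙ)` of positive
integers with `k₁+⋯+kₙ = k` and `kₙ ≥ 2` of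
`∑_{0≤m₁<⋯<mₙ} ((α)_{m₁}/m₁!) (mₙ!/(α)_{mₙ}) ∏ⱼ 1/(mⱼ+α)^{kⱼ}`. -/
theorem stmt_1 (k n : ℕ) (hn : 0 < n) (hk : n < k) (α : ℂ) (hα : 0 < α.re) :
    ∑' m : ℕ, 1 / ((m : ℂ) + α) ^ k
      = ∑' κ : {κ : Fin n → ℕ //
            (∀ i, 1 ≤ κ i) ∧ 2 ≤ κ ⟨n - 1, by omega⟩ ∧ ∑ i, κ i = k},
          ∑' t : {t : Fin n → ℕ // StrictMono t},
            poch α (t.1 ⟨0, hn⟩) / (Nat.factorial (t.1 ⟨0, hn⟩) : ℂ)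
              * ((Nat.factorial (t.1 ⟨n - 1, by omega⟩) : ℂ)
                  / poch α (t.1 ⟨n - 1, by omega⟩))
              * ∏ i, 1 / (((t.1 i : ℂ) + α) ^ (κ.1 i)) := by
  obtain ⟨N, rfl⟩ : ∃ N, n = N + 1 := ⟨n - 1, by omega⟩
  obtain ⟨j, rfl⟩ : ∃ j, k = N + 2 + j := ⟨k - (N + 2), by omega⟩
  simp_rw [← one_div_pow]
  rw [hurwitz_eq_tsum_chainSum hα, ← (exponentEquiv N j).symm.tsum_eq]
  refine tsum_congr fun κ => tsum_congr fun t => ?_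
  obtain ⟨e, rfl⟩ := (exponentEquiv N j).surjective κ
  rw [Equiv.symm_apply_apply]
  change _ = pochQuot α (t.1 0) * (((t.1 (Fin.last N)).factorial : ℂ) /
    poch α (t.1 (Fin.last N))) *
    ∏ i, (1 / ((t.1 i : ℂ) + α)) ^ (e.1 i + 1 + if i = Fin.last N then 1 else 0)
  have hprod : ∏ i, (1 / ((t.1 i : ℂ) + α)) ^ (e.1 i + 1 + if i = Fin.last N then 1 else 0)
      = (∏ i, (1 / ((t.1 i : ℂ) + α)) ^ e.1 i) * (∏ i, 1 / ((t.1 i : ℂ) + α))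
        * (1 / ((t.1 (Fin.last N) : ℂ) + α)) := by
    simp_rw [pow_add, Finset.prod_mul_distrib, pow_one, pow_ite, pow_one, pow_zero]
    simp
  have hq : 1 / (pochQuot α (t.1 (Fin.last N)) * ((t.1 (Fin.last N) : ℂ) + α))
      = ((t.1 (Fin.last N)).factorial : ℂ) / poch α (t.1 (Fin.last N))
        * (1 / ((t.1 (Fin.last N) : ℂ) + α)) := by
    rw [pochQuot, one_div, mul_inv, inv_div, one_div]
  rw [hprod, baseTerm, chainTerm, hq]
  ring
end

section
/- For all integers k, n with 0 < n < k, the sum formula for multiple zeta values holds: ∑_{k₁+⋯+kₙ = k, kᵢ ∈ ℤ_{≥1}, kₙ ≥ 2} ζ(k₁,…,kₙ) = ζ(k), where the sum is over all n-tuples of positive integers (k₁,…,kₙ) with k₁+⋯+kₙ = k and kₙ ≥ 2, and ζ(k) is the value of the Riemann zeta function at k. -/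
/-!
The proof passes to generating functions in the weight and evaluates them by the connected sum
method of Seki and Yamamoto. All sums are first taken in `ENNReal`, where they may be interchanged
freely.

Fix `0 < x < 1` and depth `n = N + 1`. Summing geometric series in each exponent, the generating
function `∑ₖ xᵏ ∑_κ ζ(κ)` over admissible `κ` of weight `k` becomes
`x^{n+1} ∑_{m₁<⋯<mₙ} (1/mₙ) ∏ᵢ 1/(mᵢ - x)` (`genfun_lhs`), while `∑_{k>n} xᵏ ζ(k)` becomes
`x^{n+1} ∑_b b⁻ⁿ/(b - x)` (`genfun_rhs`).

The two are linked through `conn x a b = f(a) f(b) / f(a+b)`, `f(a) = ∏_{j=1}^{a} (j - x)`, which is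
symmetric, equals `1` when `b = 0`, and satisfies the telescoping relation (`transport`)
`∑_{a>m} conn x a b / (a - x) = conn x m b / b` for `b ≥ 1`. By symmetry, `1/mₙ` is the sum of
`conn x mₙ b / (b - x)` over `b > 0`; the variables `mₙ, …, m₁` are then summed out one at a
time, each contributing a factor `1/b` (`collapse`, `connected_identity`).

Both generating functions therefore agree on `(0, 1)`, and uniqueness of power series coefficients
(`coeff_unique`) gives the sum formula in `ENNReal`. As `ζ(k)` is finite, all sums involved are
finite, and the identity descends to `ℂ`.
-/
open scoped BigOperators

open Filter Topology

namespace SumFormula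

/-! ### The connector -/

/-- The connector `f(a) f(b) / f(a + b)` with `f(a) = ∏_{j=1}^{a} (j - x)`. -/
noncomputable def conn (x : ℝ) (a b : ℕ) : ℝ :=
  (∏ j ∈ Finset.range a, ((j : ℝ) + 1 - x)) * (∏ j ∈ Finset.range b, ((j : ℝ) + 1 - x)) /
    ∏ j ∈ Finset.range (a + b), ((j : ℝ) + 1 - x)

lemma factor_pos {x : ℝ} (hx : x < 1) (a : ℕ) :
    0 < ∏ j ∈ Finset.range a, ((j : ℝ) + 1 - x) :=
  Finset.prod_pos fun j _ => by
    have : (0 : ℝ) ≤ j := j.cast_nonneg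
    linarith

lemma conn_pos {x : ℝ} (hx : x < 1) (a b : ℕ) : 0 < conn x a b :=
  div_pos (mul_pos (factor_pos hx a) (factor_pos hx b)) (factor_pos hx (a + b))

lemma conn_comm (x : ℝ) (a b : ℕ) : conn x a b = conn x b a := by
  simp only [conn, add_comm a b, mul_comm]

lemma conn_zero {x : ℝ} (hx : x < 1) (a : ℕ) : conn x a 0 = 1 := by
  have := (factor_pos hx a).ne'
  simp [conn, this]

lemma conn_succ {x : ℝ} (hx : x < 1) (a b : ℕ) :
    conn x a (b + 1) = conn x a b * (((b : ℝ) + 1 - x) / ((a : ℝ) + b + 1 - x)) := by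
  have h1 := (factor_pos hx (a + b)).ne'
  have h2 : (a : ℝ) + b + 1 - x ≠ 0 := by
    have : (0 : ℝ) ≤ a := a.cast_nonneg
    have : (0 : ℝ) ≤ b := b.cast_nonneg
    linarith
  rw [conn, conn, ← add_assoc, Finset.prod_range_succ _ b, Finset.prod_range_succ _ (a + b)]
  push_cast
  field_simp

lemma conn_le_one {x : ℝ} (hx : x < 1) (a b : ℕ) : conn x a b ≤ 1 := by
  induction b with
  | zero => rw [conn_zero hx]
  | succ b ih =>
    rw [conn_succ hx]
    have h1 : (0 : ℝ) ≤ a := a.cast_nonneg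
    have h2 : (0 : ℝ) ≤ b := b.cast_nonneg
    refine mul_le_one₀ ih (div_nonneg (by linarith) (by linarith)) ?_
    rw [div_le_one (by linarith)]
    linarith

lemma conn_tendsto {x : ℝ} (hx : x < 1) {b : ℕ} (hb : 0 < b) :
    Tendsto (fun a => conn x a b) atTop (𝓝 0) := by
  obtain ⟨b, rfl⟩ := Nat.exists_eq_succ_of_ne_zero hb.ne'
  have hlim : Tendsto (fun a : ℕ => ((b : ℝ) + 1 - x) / ((a : ℝ) + b + 1 - x)) atTop (𝓝 0) := by
    refine Tendsto.div_atTop tendsto_const_nhds ?_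
    have : (fun a : ℕ => (a : ℝ) + b + 1 - x) = fun a : ℕ => (a : ℝ) + (b + 1 - x) := by
      ext a; ring
    rw [this]
    exact tendsto_atTop_add_const_right _ _ tendsto_natCast_atTop_atTop
  refine squeeze_zero (fun a => (conn_pos hx _ _).le) (fun a => ?_) hlim
  rw [Nat.succ_eq_add_one, conn_succ hx]
  have h1 : (0 : ℝ) ≤ a := a.cast_nonneg
  have h2 : (0 : ℝ) ≤ b := b.cast_nonneg
  exact mul_le_of_le_one_left (div_nonneg (by linarith) (by linarith)) (conn_le_one hx _ _)

/-- The `a`-th term of the transport sum is a difference of consecutive values of `conn x · b / b`. -/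
lemma conn_step {x : ℝ} (hx : x < 1) {b : ℕ} (hb : 0 < b) (a : ℕ) :
    1 / (((a + 1 : ℕ) : ℝ) - x) * conn x (a + 1) b
      = 1 / (b : ℝ) * conn x a b - 1 / (b : ℝ) * conn x (a + 1) b := by
  have h1 : (0 : ℝ) ≤ a := a.cast_nonneg
  have h2 : (0 : ℝ) < b := by exact_mod_cast hb
  have h3 : (a : ℝ) + 1 - x ≠ 0 := by linarith
  have h4 : (b : ℝ) + a + 1 - x ≠ 0 := by linarith
  rw [conn_comm x (a + 1), conn_comm x a, conn_succ hx]
  push_cast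
  field_simp
  ring

lemma tsum_pair {α β : Type*} (f : α × β → ENNReal) :
    ∑' p, f p = ∑' a, ∑' b, f (a, b) :=
  ENNReal.tsum_prod (f := fun a b => f (a, b))

lemma tsum_ite_shift (f : ℕ → ENNReal) (s : ℕ) :
    ∑' j, (if s ≤ j then f j else 0) = ∑' j, f (j + s) := by
  rw [← ENNReal.summable.sum_add_tsum_nat_add' (k := s), Finset.sum_eq_zero, zero_add]
  · simp
  · intro i hi
    simp [Finset.mem_range.1 hi]

/-- Transport relation: `∑_{a > m} conn x a b / (a - x) = conn x m b / b`. -/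
lemma transport {x : ℝ} (hx : x < 1) {b : ℕ} (hb : 0 < b) (m : ℕ) :
    ∑' a : ℕ, (if m < a then ENNReal.ofReal (1 / ((a : ℝ) - x)) * ENNReal.ofReal (conn x a b) else 0)
      = ENNReal.ofReal (1 / (b : ℝ)) * ENNReal.ofReal (conn x m b) := by
  have hnn : ∀ a : ℕ, 0 ≤ 1 / (((a + (m + 1) : ℕ) : ℝ) - x) := fun a => by
    have h1 : (0 : ℝ) ≤ a := a.cast_nonneg
    have h2 : (0 : ℝ) ≤ m := m.cast_nonneg
    refine one_div_nonneg.2 ?_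
    push_cast
    linarith
  have hnn' : ∀ a : ℕ, 0 ≤ 1 / (((a + (m + 1) : ℕ) : ℝ) - x) * conn x (a + (m + 1)) b :=
    fun a => mul_nonneg (hnn a) (conn_pos hx _ _).le
  have hs : HasSum (fun a : ℕ => 1 / (((a + (m + 1) : ℕ) : ℝ) - x) * conn x (a + (m + 1)) b)
      (1 / (b : ℝ) * conn x m b) := by
    rw [hasSum_iff_tendsto_nat_of_nonneg hnn']
    have hpart : ∀ N : ℕ, ∑ a ∈ Finset.range N,
        1 / (((a + (m + 1) : ℕ) : ℝ) - x) * conn x (a + (m + 1)) b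
        = 1 / (b : ℝ) * conn x m b - 1 / (b : ℝ) * conn x (N + m) b := by
      intro N
      induction N with
      | zero => simp
      | succ N ih =>
        rw [Finset.sum_range_succ, ih, ← add_assoc, conn_step hx hb, show N + 1 + m = N + m + 1 by ring]
        ring
    simp_rw [hpart]
    have := ((tendsto_add_atTop_iff_nat m).2 (conn_tendsto hx hb)).const_mul (1 / (b : ℝ))
    simpa using this.const_sub (1 / (b : ℝ) * conn x m b)
  have := tsum_ite_shift
    (fun a : ℕ => ENNReal.ofReal (1 / ((a : ℝ) - x)) * ENNReal.ofReal (conn x a b)) (m + 1)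
  simp only [Nat.succ_le_iff] at this
  rw [this, ← ENNReal.ofReal_mul (by positivity), ← hs.tsum_eq,
    ENNReal.ofReal_tsum_of_nonneg hnn' hs.summable]
  exact tsum_congr fun a => (ENNReal.ofReal_mul (hnn a)).symm

/-! ### Summing over increasing tuples -/

/-- Appending `a` to an increasing tuple of positive integers. Using `sup` for the largest entry
(with value `0` on the empty tuple) makes one condition cover both `a > tᵢ` and `a > 0`. -/
lemma strictMono_snoc_iff {n : ℕ} (t : Fin n → ℕ) (a : ℕ) :
    (StrictMono (Fin.snoc (α := fun _ => ℕ) t a) ∧ ∀ i, 1 ≤ Fin.snoc (α := fun _ => ℕ) t a i) ↔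
      (StrictMono t ∧ ∀ i, 1 ≤ t i) ∧ Finset.univ.sup t < a := by
  constructor
  · rintro ⟨h1, h2⟩
    have ha : 0 < a := Nat.lt_of_lt_of_le Nat.one_pos (by simpa using h2 (Fin.last n))
    refine ⟨⟨fun i j hij => ?_, fun i => ?_⟩, ?_⟩
    · simpa using h1 (Fin.castSucc_lt_castSucc_iff.2 hij)
    · simpa using h2 i.castSucc
    · rw [Finset.sup_lt_iff ha]
      intro i _
      simpa using h1 (Fin.castSucc_lt_last i)
  · rintro ⟨⟨h1, h2⟩, h3⟩
    have ha : 0 < a := lt_of_le_of_lt (Nat.zero_le _) h3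
    rw [Finset.sup_lt_iff ha] at h3
    constructor
    · intro i j hij
      induction j using Fin.lastCases with
      | last =>
        induction i using Fin.lastCases with
        | last => exact absurd hij (lt_irrefl _)
        | cast i => simpa using h3 i (Finset.mem_univ _)
      | cast j =>
        induction i using Fin.lastCases with
        | last => exact absurd hij (not_lt.2 (Fin.le_last _))
        | cast i => simpa using h1 (Fin.castSucc_lt_castSucc_iff.1 hij)
    · intro i
      induction i using Fin.lastCases with
      | last => simpa using Nat.succ_le_of_lt ha
      | cast i => simpa using h2 i

lemma sup_snoc {n : ℕ} (t : Fin n → ℕ) (a : ℕ) (h : Finset.univ.sup t < a) :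
    Finset.univ.sup (Fin.snoc (α := fun _ => ℕ) t a) = a := by
  refine le_antisymm (Finset.sup_le fun i _ => ?_) ?_
  · induction i using Fin.lastCases with
    | last => simp
    | cast i => simpa using (Finset.le_sup (f := t) (Finset.mem_univ i)).trans h.le
  · simpa using Finset.le_sup (f := Fin.snoc (α := fun _ => ℕ) t a) (Finset.mem_univ (Fin.last n))

/-- Increasing `n`-tuples `0 < t₀ < ⋯ < tₙ₋₁` of integers. -/
abbrev Chain (n : ℕ) : Type := {t : Fin n → ℕ // StrictMono t ∧ ∀ i, 1 ≤ t i}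

lemma tsum_chain_succ (n : ℕ) (h : (Fin (n + 1) → ℕ) → ENNReal) :
    ∑' t : Chain (n + 1), h t.1 = ∑' t : Chain n, ∑' a : ℕ,
      if Finset.univ.sup t.1 < a then h (Fin.snoc (α := fun _ => ℕ) t.1 a) else 0 := by
  classical
  have e1 := tsum_subtype {t : Fin (n + 1) → ℕ | StrictMono t ∧ ∀ i, 1 ≤ t i} h
  have e2 := tsum_subtype {t : Fin n → ℕ | StrictMono t ∧ ∀ i, 1 ≤ t i} (fun t => ∑' a : ℕ,
      if Finset.univ.sup t < a then h (Fin.snoc (α := fun _ => ℕ) t a) else 0)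
  refine e1.trans (Eq.trans ?_ e2.symm)
  rw [← (Fin.snocEquiv fun _ => ℕ).tsum_eq, tsum_pair, ENNReal.tsum_comm]
  refine tsum_congr fun t => ?_
  simp only [Set.indicator_apply, Set.mem_ofPred_eq]
  split_ifs with ht
  · refine tsum_congr fun a => if_congr ?_ rfl rfl
    exact (strictMono_snoc_iff t a).trans (and_iff_right ht)
  · refine ENNReal.tsum_eq_zero.2 fun a => if_neg fun hta => ht ((strictMono_snoc_iff t a).1 hta).1

/-- Summing out the entries of the tuple from the largest down, each by `transport`. -/
lemma collapse {x : ℝ} (hx : x < 1) {b : ℕ} (hb : 0 < b) (n : ℕ) :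
    ∑' t : Chain n, (∏ i, ENNReal.ofReal (1 / ((t.1 i : ℝ) - x))) *
      ENNReal.ofReal (conn x (Finset.univ.sup t.1) b) = ENNReal.ofReal (1 / (b : ℝ)) ^ n := by
  induction n with
  | zero =>
    have : Unique (Chain 0) :=
      { default := ⟨Fin.elim0, fun i => i.elim0, fun i => i.elim0⟩
        uniq := fun t => Subtype.ext (Subsingleton.elim _ _) }
    rw [tsum_fintype, Fintype.sum_unique]
    simp [conn_comm x 0, conn_zero hx]
  | succ n ih =>
    rw [tsum_chain_succ n (fun t => (∏ i, ENNReal.ofReal (1 / ((t i : ℝ) - x))) *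
      ENNReal.ofReal (conn x (Finset.univ.sup t) b)), pow_succ', ← ih, ← ENNReal.tsum_mul_left]
    refine tsum_congr fun t => ?_
    rw [mul_left_comm, ← transport hx hb, ← ENNReal.tsum_mul_left]
    refine tsum_congr fun a => ?_
    split_ifs with ha
    · rw [sup_snoc _ _ ha, Fin.prod_univ_castSucc]
      simp [mul_assoc]
    · simp

lemma sup_chain {N : ℕ} (t : Chain (N + 1)) : Finset.univ.sup t.1 = t.1 (Fin.last N) :=
  le_antisymm (Finset.sup_le fun i _ => t.2.1.monotone (Fin.le_last i))
    (Finset.le_sup (Finset.mem_univ _))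

/-- The generating function identity, up to the common factor `x ^ (N + 2)`. -/
lemma connected_identity {x : ℝ} (hx : x < 1) (N : ℕ) :
    ∑' t : Chain (N + 1), (∏ i, ENNReal.ofReal (1 / ((t.1 i : ℝ) - x))) *
        ENNReal.ofReal (1 / (t.1 (Fin.last N) : ℝ))
      = ∑' b : ℕ, if 0 < b then ENNReal.ofReal (1 / ((b : ℝ) - x)) *
          ENNReal.ofReal (1 / (b : ℝ)) ^ (N + 1) else 0 := by
  have h1 : ∀ t : Chain (N + 1), ENNReal.ofReal (1 / (t.1 (Fin.last N) : ℝ)) =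
      ∑' b : ℕ, if 0 < b then ENNReal.ofReal (1 / ((b : ℝ) - x)) *
        ENNReal.ofReal (conn x (Finset.univ.sup t.1) b) else 0 := by
    intro t
    have := transport hx (t.2.2 (Fin.last N)) 0
    rw [conn_comm, conn_zero hx, ENNReal.ofReal_one, mul_one] at this
    rw [← this, sup_chain]
    simp only [conn_comm x (t.1 (Fin.last N))]
  simp_rw [h1, ← ENNReal.tsum_mul_left]
  rw [ENNReal.tsum_comm]
  refine tsum_congr fun b => ?_
  split_ifs with hb
  · rw [← collapse hx hb, ← ENNReal.tsum_mul_left]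
    exact tsum_congr fun t => mul_left_comm _ _ _
  · simp

/-! ### Generating functions in the weight -/

lemma tsum_prod_pi {n : ℕ} (g : Fin n → ℕ → ENNReal) :
    ∑' κ : Fin n → ℕ, ∏ i, g i (κ i) = ∏ i, ∑' j, g i j := by
  induction n with
  | zero => rw [tsum_fintype]; simp
  | succ n ih =>
    rw [← (Fin.consEquiv fun _ => ℕ).tsum_eq, tsum_pair, Fin.prod_univ_succ, ← ih,
      ← ENNReal.tsum_mul_right]
    refine tsum_congr fun a => ?_
    rw [← ENNReal.tsum_mul_left]
    refine tsum_congr fun κ => ?_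
    simp [Fin.consEquiv, Fin.prod_univ_succ]

lemma geom {x : ℝ} (h0 : 0 < x) (hx : x < 1) {m : ℕ} (hm : 0 < m) (s : ℕ) :
    ∑' j : ℕ, (if s + 1 ≤ j then ENNReal.ofReal x ^ j * ENNReal.ofReal (1 / (m : ℝ) ^ j) else 0)
      = ENNReal.ofReal x ^ (s + 1) * ENNReal.ofReal (1 / (m : ℝ)) ^ s *
        ENNReal.ofReal (1 / ((m : ℝ) - x)) := by
  have hm1 : (1 : ℝ) ≤ m := by exact_mod_cast hm
  have hq : x / m < 1 := by rw [div_lt_one (by linarith)]; linarith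
  have hq0 : 0 ≤ x / m := by positivity
  rw [tsum_ite_shift]
  have hterm : ∀ j : ℕ, ENNReal.ofReal x ^ (j + (s + 1)) * ENNReal.ofReal (1 / (m : ℝ) ^ (j + (s + 1)))
      = ENNReal.ofReal ((x / m) ^ (s + 1) * (x / m) ^ j) := by
    intro j
    rw [← ENNReal.ofReal_pow h0.le, ← ENNReal.ofReal_mul (by positivity)]
    congr 1
    rw [← pow_add, div_pow, add_comm j]
    ring
  have hs := (hasSum_geometric_of_lt_one hq0 hq).mul_left ((x / m) ^ (s + 1))
  simp_rw [hterm]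
  rw [← ENNReal.ofReal_tsum_of_nonneg (fun j => by positivity) hs.summable, hs.tsum_eq,
    ← ENNReal.ofReal_pow h0.le, ← ENNReal.ofReal_pow (by positivity),
    ← ENNReal.ofReal_mul (by positivity), ← ENNReal.ofReal_mul (by positivity)]
  congr 1
  have : (m : ℝ) - x ≠ 0 := by linarith
  have : (m : ℝ) ≠ 0 := by linarith
  have : 1 - x / m ≠ 0 := by linarith
  rw [div_pow, one_div_pow, pow_succ (m : ℝ)]
  field_simp

/-- Admissible indices of depth `N + 1` and weight `k`. -/
abbrev Index (N k : ℕ) : Type :=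
  {κ : Fin (N + 1) → ℕ // (∀ i, 1 ≤ κ i) ∧ 2 ≤ κ (Fin.last N) ∧ ∑ i, κ i = k}

/-- The multiple zeta value `ζ(κ)`, with value `⊤` when the series diverges. -/
noncomputable def mzv {n : ℕ} (κ : Fin n → ℕ) : ENNReal :=
  ∑' t : Chain n, ∏ i, ENNReal.ofReal (1 / (t.1 i : ℝ) ^ κ i)

lemma genfun_lhs {x : ℝ} (h0 : 0 < x) (hx : x < 1) (N : ℕ) :
    ∑' k : ℕ, ENNReal.ofReal x ^ k * ∑' κ : Index N k, mzv κ.1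
      = ENNReal.ofReal x ^ (N + 2) * ∑' t : Chain (N + 1),
        (∏ i, ENNReal.ofReal (1 / ((t.1 i : ℝ) - x))) *
          ENNReal.ofReal (1 / (t.1 (Fin.last N) : ℝ)) := by
  classical
  -- Admissibility is written entrywise, as `κ i ≥ 1` or `κ i ≥ 2` (last entry), so that the sum
  -- over `κ` factors over the entries.
  have hall : ∑' k : ℕ, ENNReal.ofReal x ^ k * ∑' κ : Index N k, mzv κ.1
      = ∑' κ : Fin (N + 1) → ℕ, if (∀ i, (if i = Fin.last N then 1 else 0) + 1 ≤ κ i) then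
          ENNReal.ofReal x ^ (∑ i, κ i) * mzv κ else 0 := by
    have h1 : ∀ k : ℕ, ENNReal.ofReal x ^ k * ∑' κ : Index N k, mzv κ.1 =
        ∑' κ : Fin (N + 1) → ℕ, if k = ∑ i, κ i then
          (if (∀ i, (if i = Fin.last N then 1 else 0) + 1 ≤ κ i) then
            ENNReal.ofReal x ^ (∑ i, κ i) * mzv κ else 0) else 0 := by
      intro k
      have e := tsum_subtype {κ : Fin (N + 1) → ℕ |
        (∀ i, 1 ≤ κ i) ∧ 2 ≤ κ (Fin.last N) ∧ ∑ i, κ i = k} mzv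
      refine (congrArg _ e).trans ?_
      rw [← ENNReal.tsum_mul_left]
      refine tsum_congr fun κ => ?_
      have hiff : (∀ i, (if i = Fin.last N then 1 else 0) + 1 ≤ κ i) ↔
          (∀ i, 1 ≤ κ i) ∧ 2 ≤ κ (Fin.last N) := by
        constructor
        · intro h
          refine ⟨fun i => le_trans (Nat.le_add_left _ _) (h i), by simpa using h (Fin.last N)⟩
        · rintro ⟨h1, h2⟩ i
          split_ifs with hi
          · subst hi; simpa using h2
          · simpa using h1 i
      simp only [Set.indicator_apply, Set.mem_ofPred_eq, hiff]
      by_cases hk : k = ∑ i, κ i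
      · subst hk
        simp
      · simp [hk, Ne.symm hk]
    simp_rw [h1]
    rw [ENNReal.tsum_comm]
    exact tsum_congr fun κ => tsum_ite_eq _ _
  have hswap : ∀ κ : Fin (N + 1) → ℕ,
      (if (∀ i, (if i = Fin.last N then 1 else 0) + 1 ≤ κ i) then
          ENNReal.ofReal x ^ (∑ i, κ i) * mzv κ else 0) =
      ∑' t : Chain (N + 1), ∏ i, (if (if i = Fin.last N then 1 else 0) + 1 ≤ κ i then
        ENNReal.ofReal x ^ κ i * ENNReal.ofReal (1 / (t.1 i : ℝ) ^ κ i) else 0) := by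
    intro κ
    split_ifs with h
    · rw [mzv, ← ENNReal.tsum_mul_left]
      refine tsum_congr fun t => ?_
      rw [← Finset.prod_pow_eq_pow_sum, ← Finset.prod_mul_distrib]
      exact Finset.prod_congr rfl fun i _ => (if_pos (h i)).symm
    · push Not at h
      obtain ⟨i, hi⟩ := h
      refine (ENNReal.tsum_eq_zero.2 fun t => ?_).symm
      exact Finset.prod_eq_zero (Finset.mem_univ i) (if_neg (not_le.2 hi))
  rw [hall]
  simp_rw [hswap]
  rw [ENNReal.tsum_comm, ← ENNReal.tsum_mul_left]
  refine tsum_congr fun t => ?_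
  rw [tsum_prod_pi (fun i j => if (if i = Fin.last N then 1 else 0) + 1 ≤ j then
        ENNReal.ofReal x ^ j * ENNReal.ofReal (1 / (t.1 i : ℝ) ^ j) else 0)]
  simp_rw [fun i => geom h0 hx (t.2.2 i)]
  rw [Finset.prod_mul_distrib, Finset.prod_mul_distrib, Finset.prod_pow_eq_pow_sum]
  simp [Finset.sum_add_distrib, add_comm 1, mul_assoc, mul_comm]

lemma genfun_rhs {x : ℝ} (h0 : 0 < x) (hx : x < 1) (N : ℕ) :
    ∑' k : ℕ, ENNReal.ofReal x ^ k *
        (if N + 2 ≤ k then ∑' b : ℕ, ENNReal.ofReal (1 / (b : ℝ) ^ k) else 0)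
      = ENNReal.ofReal x ^ (N + 2) * ∑' b : ℕ, if 0 < b then ENNReal.ofReal (1 / ((b : ℝ) - x)) *
          ENNReal.ofReal (1 / (b : ℝ)) ^ (N + 1) else 0 := by
  have h1 : ∀ k : ℕ, ENNReal.ofReal x ^ k *
      (if N + 2 ≤ k then ∑' b : ℕ, ENNReal.ofReal (1 / (b : ℝ) ^ k) else 0) =
      ∑' b : ℕ, if N + 2 ≤ k then ENNReal.ofReal x ^ k * ENNReal.ofReal (1 / (b : ℝ) ^ k) else 0 := by
    intro k
    split_ifs
    · rw [ENNReal.tsum_mul_left]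
    · simp
  simp_rw [h1]
  rw [ENNReal.tsum_comm, ← ENNReal.tsum_mul_left]
  refine tsum_congr fun b => ?_
  split_ifs with hb
  · rw [geom h0 hx hb (N + 1)]
    ring
  · obtain rfl : b = 0 := by omega
    rw [mul_zero]
    refine ENNReal.tsum_eq_zero.2 fun k => ?_
    split_ifs with hk
    · have : k ≠ 0 := by omega
      simp [this]
    · rfl

/-! ### Comparing coefficients -/

/-- Two power series with coefficients in `[0, ∞]` that agree on `(0, 1)`, with finite value at
`1 / 2`, have equal coefficients: both are analytic at `0` and agree on a set accumulating there. -/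
lemma coeff_unique {A B : ℕ → ENNReal}
    (h : ∀ x : ℝ, 0 < x → x < 1 →
      ∑' k, ENNReal.ofReal x ^ k * A k = ∑' k, ENNReal.ofReal x ^ k * B k)
    (hB : ∑' k, ENNReal.ofReal (1 / 2) ^ k * B k ≠ ⊤) : A = B := by
  have hA : ∑' k, ENNReal.ofReal (1 / 2) ^ k * A k ≠ ⊤ := by
    rwa [h _ (by norm_num) (by norm_num)]
  have hfin : ∀ C : ℕ → ENNReal, ∑' k, ENNReal.ofReal (1 / 2) ^ k * C k ≠ ⊤ → ∀ k, C k ≠ ⊤ := by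
    intro C hC k hk
    refine ENNReal.ne_top_of_tsum_ne_top hC k ?_
    rw [hk]
    exact ENNReal.mul_top (by simp)
  have hsum : ∀ C : ℕ → ENNReal, ∑' k, ENNReal.ofReal (1 / 2) ^ k * C k ≠ ⊤ →
      HasFPowerSeriesAt (fun z : ℝ => ∑' k, z ^ k * (C k).toReal)
        (FormalMultilinearSeries.ofScalars ℝ fun k => (C k).toReal) 0 := by
    intro C hC
    rw [hasFPowerSeriesAt_iff]
    have hs := ENNReal.summable_toReal hC
    filter_upwards [Metric.ball_mem_nhds (0 : ℝ) (show (0 : ℝ) < 1 / 2 by norm_num)] with z hz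
    rw [mem_ball_zero_iff] at hz
    simp only [FormalMultilinearSeries.coeff_ofScalars, smul_eq_mul, zero_add]
    refine Summable.hasSum (Summable.of_norm_bounded hs fun k => ?_)
    rw [norm_mul, norm_pow, ENNReal.toReal_mul, ENNReal.toReal_pow,
      ENNReal.toReal_ofReal (by norm_num), Real.norm_of_nonneg ENNReal.toReal_nonneg]
    gcongr
  have hEq : ∃ᶠ z : ℝ in 𝓝[≠] 0,
      ∑' k, z ^ k * (A k).toReal = ∑' k, z ^ k * (B k).toReal := by
    have : ∃ᶠ z : ℝ in 𝓝[>] 0,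
        ∑' k, z ^ k * (A k).toReal = ∑' k, z ^ k * (B k).toReal := by
      refine Eventually.frequently ?_
      filter_upwards [Ioo_mem_nhdsGT (show (0 : ℝ) < 1 by norm_num)] with z hz
      have hz' := congrArg ENNReal.toReal (h z hz.1 hz.2)
      rw [ENNReal.tsum_toReal_eq fun k => ENNReal.mul_ne_top (by simp) (hfin A hA k),
        ENNReal.tsum_toReal_eq fun k => ENNReal.mul_ne_top (by simp) (hfin B hB k)] at hz'
      simpa [ENNReal.toReal_ofReal hz.1.le] using hz'
    exact this.filter_mono (nhdsWithin_mono _ fun z hz => ne_of_gt hz)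
  have hev := ((hsum A hA).analyticAt.frequently_eq_iff_eventually_eq (hsum B hB).analyticAt).1 hEq
  have := ((hsum A hA).congr hev).eq_formalMultilinearSeries (hsum B hB)
  have := FormalMultilinearSeries.ofScalars_series_injective ℝ ℝ this
  ext1 k
  exact (ENNReal.toReal_eq_toReal_iff' (hfin A hA k) (hfin B hB k)).1 (congrFun this k)

lemma zeta_ne_top {k : ℕ} (hk : 1 < k) : ∑' b : ℕ, ENNReal.ofReal (1 / (b : ℝ) ^ k) ≠ ⊤ := by
  rw [← ENNReal.ofReal_tsum_of_nonneg (fun b => by positivity)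
    (Real.summable_one_div_nat_pow.2 hk)]
  exact ENNReal.ofReal_ne_top

/-- Finiteness at `x = 1 / 2`, from `ζ(k) ≤ ζ(2)`. -/
lemma genfun_ne_top (N : ℕ) :
    ∑' k : ℕ, ENNReal.ofReal (1 / 2) ^ k *
        (if N + 2 ≤ k then ∑' b : ℕ, ENNReal.ofReal (1 / (b : ℝ) ^ k) else 0) ≠ ⊤ := by
  have hle : ∑' k : ℕ, ENNReal.ofReal (1 / 2) ^ k *
        (if N + 2 ≤ k then ∑' b : ℕ, ENNReal.ofReal (1 / (b : ℝ) ^ k) else 0) ≤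
      ∑' k : ℕ, ENNReal.ofReal (1 / 2) ^ k * ∑' b : ℕ, ENNReal.ofReal (1 / (b : ℝ) ^ 2) := by
    refine ENNReal.tsum_le_tsum fun k => mul_le_mul_right ?_ _
    split_ifs with hk
    · refine ENNReal.tsum_le_tsum fun b => ENNReal.ofReal_le_ofReal ?_
      rcases Nat.eq_zero_or_pos b with rfl | hb
      · have : k ≠ 0 := by omega
        simp [this]
      · have : (1 : ℝ) ≤ b := by exact_mod_cast hb
        gcongr
        omega
    · exact zero_le
  refine ne_top_of_le_ne_top ?_ hle
  rw [ENNReal.tsum_mul_right, ENNReal.tsum_geometric]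
  refine ENNReal.mul_ne_top (ENNReal.inv_ne_top.2 ?_) (zeta_ne_top (by norm_num))
  rw [ne_eq, tsub_eq_zero_iff_le, not_le]
  simp

/-- The sum formula in `ENNReal`, in depth `N + 1`. -/
theorem sum_formula_ennreal {N k : ℕ} (hk : N + 2 ≤ k) :
    ∑' κ : Index N k, mzv κ.1 = ∑' b : ℕ, ENNReal.ofReal (1 / (b : ℝ) ^ k) := by
  have := coeff_unique (A := fun k => ∑' κ : Index N k, mzv κ.1)
    (B := fun k => if N + 2 ≤ k then ∑' b : ℕ, ENNReal.ofReal (1 / (b : ℝ) ^ k) else 0)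
    (fun x h0 hx => by rw [genfun_lhs h0 hx, genfun_rhs h0 hx, connected_identity hx])
    (genfun_ne_top N)
  simpa [hk] using congrFun this k

/-- The complex series of `ζ(κ)` is the real number underlying `mzv κ`; both are `0` on divergence. -/
lemma ofReal_toReal_mzv {n : ℕ} (κ : Fin n → ℕ) :
    ∑' t : Chain n, ∏ i, 1 / ((t.1 i : ℂ) ^ κ i) = ((mzv κ).toReal : ℂ) := by
  rw [mzv, ENNReal.tsum_toReal_eq fun t => ENNReal.prod_ne_top fun i _ => ENNReal.ofReal_ne_top,
    Complex.ofReal_tsum]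
  refine tsum_congr fun t => ?_
  rw [ENNReal.toReal_prod, Complex.ofReal_prod]
  refine Finset.prod_congr rfl fun i _ => ?_
  rw [ENNReal.toReal_ofReal (by positivity)]
  push_cast
  rfl

end SumFormula

open SumFormula in
/-- The sum formula for multiple zeta values: for integers `0 < n < k`,
`∑_{k₁+⋯+kₙ=k, kᵢ≥1, kₙ≥2} ζ(k₁,…,kₙ) = ζ(k)`, where
`ζ(k₁,…,kₙ) = ∑_{0<m₁<⋯<mₙ} 1/(m₁^{k₁} ⋯ mₙ^{kₙ})` and `ζ` is the Riemann zeta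
function. -/
theorem stmt_3 (k n : ℕ) (hn : 0 < n) (hk : n < k) :
    ∑' κ : {κ : Fin n → ℕ //
          (∀ i, 1 ≤ κ i) ∧ 2 ≤ κ ⟨n - 1, by omega⟩ ∧ ∑ i, κ i = k},
        ∑' t : {t : Fin n → ℕ // StrictMono t ∧ ∀ i, 1 ≤ t i},
          ∏ i, 1 / ((t.1 i : ℂ) ^ (κ.1 i))
      = riemannZeta k := by
  obtain ⟨N, rfl⟩ := Nat.exists_eq_succ_of_ne_zero hn.ne'
  have hk1 : 1 < k := by omega
  have hmain := sum_formula_ennreal (N := N) (k := k) hk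
  have htop : ∑' κ : Index N k, mzv κ.1 ≠ ⊤ := hmain ▸ zeta_ne_top hk1
  calc _ = ∑' κ : Index N k, ((mzv κ.1).toReal : ℂ) :=
        tsum_congr fun κ => ofReal_toReal_mzv κ.1
    _ = ((∑' κ : Index N k, mzv κ.1).toReal : ℂ) := by
        rw [ENNReal.tsum_toReal_eq fun κ => ENNReal.ne_top_of_tsum_ne_top htop κ,
          Complex.ofReal_tsum]
    _ = riemannZeta k := by
        rw [hmain, zeta_nat_eq_tsum_of_gt_one hk1,
          ENNReal.tsum_toReal_eq fun b => ENNReal.ofReal_ne_top, Complex.ofReal_tsum]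
        refine tsum_congr fun b => ?_
        rw [ENNReal.toReal_ofReal (by positivity)]
        push_cast
        rfl
end
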